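/- Let d ≥ 2 and 1 ≤ n < d. For Lebesgue-almost-every choice of the coefficient tuples defining n convex PL functions f_1, …, f_n on ℝ^d (each a maximum of r_j ≥ 2 affine functions), the one-point compactification of X = X_1 ∩ ⋯ ∩ X_n, where X_j is the bend locus of f_j, is (d−n−1)-connected. -/

import Mathlib

open scoped RealInnerProductSpace
open MeasureTheory

/-- The convex PL function `x ↦ max_{1 ≤ i ≤ r} (⟪x, b i⟫ + a i)` (an `iSup` over the
nonempty finite index type `Fin r`, hence a maximum). -/
noncomputable def plMax {d r : ℕ} (b : Fin r → EuclideanSpace ℝ (Fin d)) (a : Fin r → ℝ) :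
    EuclideanSpace ℝ (Fin d) → ℝ :=
  fun x => ⨆ i : Fin r, (⟪x, b i⟫ + a i)

/-- The bend locus of a convex PL function: the set of points where it is not differentiable. -/
def bendLocus {d r : ℕ} (b : Fin r → EuclideanSpace ℝ (Fin d)) (a : Fin r → ℝ) :
    Set (EuclideanSpace ℝ (Fin d)) :=
  {x | ¬ DifferentiableAt ℝ (plMax b a) x}

/-- A topological space `Y` is `m`-connected (`m ≥ 0`): it is nonempty, path-connected,
and all homotopy groups `π_k(Y, y)` for `1 ≤ k ≤ m` and all basepoints `y` are trivial. -/
def SpaceMConnected (m : ℕ) (Y : Type*) [TopologicalSpace Y] : Prop :=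
  Nonempty Y ∧ PathConnectedSpace Y ∧
    ∀ k : ℕ, 1 ≤ k → k ≤ m → ∀ y : Y, Subsingleton (HomotopyGroup (Fin k) Y y)

/-!
Let `X` be the intersection. The proof is Morse theory for the distance to a generic point `p`,
regarded as a height on `OnePoint X` with `∞` as its unique maximum. As `X` is locally a cone, small
spheres near `x : X` bound in `X` near `x`. Suppose that those of dimension less than `d - n - 1`
that lie farther from `p` than `x` even bound in the part of `X` farther from `p` than `x`. Then a
map of a sphere of dimension at most `d - n - 1` to `OnePoint X` can be pushed up past every level,
cell by cell over a fine cubical grid, and is finally coned off at `∞`.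

Near `x` the set `X` is a translate of the cone on which, for each `j`, the maximum of the linear
parts of the affine functions of `f_j` active at `x` is attained twice. For generic coefficients the
differences of these linear parts are linearly independent, so the amounts by which the forms fall
short of their maxima can be changed independently. First all forms are made maximal for which this
increases the distance to `p`. What remains either contracts in a direction away from `p` or is the
graph of a map over a linear space of dimension `d - n`, where spheres of dimension less than
`d - n - 1` bound in the complement of the origin.
-/

open Set Metric Topology

section SphereExtends

variable {Y Z : Type*} [TopologicalSpace Y] [TopologicalSpace Z] {j : ℕ}

/-- Every continuous map from the `(j - 1)`-sphere to `A` extends to a continuous map from the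
`j`-ball to `B`. Sphere and ball are those of the sup norm, that is, the boundary of a cube and the
cube; for `j = 0` the sphere is empty and the condition says that `B` is nonempty. -/
def SphereExtends (j : ℕ) (A B : Set Y) : Prop :=
  ∀ f : (Fin j → ℝ) → Y, ContinuousOn f (sphere 0 1) → MapsTo f (sphere 0 1) A →
    ∃ g : (Fin j → ℝ) → Y, ContinuousOn g (closedBall 0 1) ∧ MapsTo g (closedBall 0 1) B ∧
      EqOn g f (sphere 0 1)

theorem SphereExtends.mono {A A' B B' : Set Y} (h : SphereExtends j A B) (hA : A' ⊆ A)
    (hB : B ⊆ B') : SphereExtends j A' B' := by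
  intro f hf hfA
  obtain ⟨g, hg, hgB, hgf⟩ := h f hf (hfA.mono_right hA)
  exact ⟨g, hg, hgB.mono_right hB, hgf⟩

theorem SphereExtends.of_leftInvOn {A B : Set Y} {A' B' : Set Z} {i : Y → Z} {r : Z → Y}
    (h : SphereExtends j A' B') (hi : ContinuousOn i A) (hiA : MapsTo i A A')
    (hr : ContinuousOn r B') (hrB : MapsTo r B' B) (hri : LeftInvOn r i A) :
    SphereExtends j A B := by
  intro f hf hfA
  obtain ⟨g, hg, hgB, hgf⟩ := h (i ∘ f) (hi.comp hf hfA) (hiA.comp hfA)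
  refine ⟨r ∘ g, hr.comp hg hgB, hrB.comp hgB, fun x hx => ?_⟩
  rw [Function.comp_apply, hgf hx, Function.comp_apply, hri (hfA hx)]

theorem sphereExtends_singleton (y : Y) : SphereExtends j {y} {y} := fun _ _ hfA =>
  ⟨fun _ => y, continuousOn_const, fun _ _ => rfl, fun _ hx => (hfA hx).symm⟩

theorem SphereExtends.exists_extension_of_card_eq {κ : Type*} [Fintype κ] {A B : Set Y}
    (h : SphereExtends j A B) (hκ : Fintype.card κ = j) {f : (κ → ℝ) → Y}
    (hf : ContinuousOn f (sphere 0 1)) (hfA : MapsTo f (sphere 0 1) A) :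
    ∃ g : (κ → ℝ) → Y, ContinuousOn g (closedBall 0 1) ∧ MapsTo g (closedBall 0 1) B ∧
      EqOn g f (sphere 0 1) := by
  let e : (κ → ℝ) ≃ᵢ (Fin j → ℝ) :=
    IsometryEquiv.piCongrLeft' (Y := fun _ => ℝ) (Fintype.equivFinOfCardEq hκ)
  have he : MapsTo e (closedBall 0 1) (closedBall 0 1) := e.isometry.mapsTo_closedBall 0 1
  have he_sphere : MapsTo e (sphere 0 1) (sphere 0 1) := e.isometry.mapsTo_sphere 0 1
  have he_symm : MapsTo e.symm (sphere 0 1) (sphere 0 1) := by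
    have h0 : e.symm 0 = 0 := e.symm_apply_apply 0
    simpa only [h0] using e.symm.isometry.mapsTo_sphere 0 1
  obtain ⟨g, hg, hgB, hgf⟩ := h (f ∘ e.symm) (hf.comp e.symm.continuous.continuousOn he_symm)
    (hfA.comp he_symm)
  refine ⟨g ∘ e, hg.comp e.continuous.continuousOn he, hgB.comp he, fun x hx => ?_⟩
  rw [Function.comp_apply, hgf (he_sphere hx), Function.comp_apply, e.symm_apply_apply]

theorem exists_continuousOn_union {K C : Set Y} {f g : Y → Z} (hK : IsClosed K) (hC : IsClosed C)
    (hf : ContinuousOn f K) (hg : ContinuousOn g C) (hfg : EqOn f g (K ∩ C)) :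
    ∃ F, ContinuousOn F (K ∪ C) ∧ EqOn F f K ∧ EqOn F g C := by
  classical
  have hFf : EqOn (K.piecewise f g) f K := K.piecewise_eqOn f g
  have hFg : EqOn (K.piecewise f g) g C := fun x hx => by
    by_cases hxK : x ∈ K
    · rw [hFf hxK, hfg ⟨hxK, hx⟩]
    · exact K.piecewise_eq_of_notMem f g hxK
  exact ⟨_, (hf.congr hFf).union_of_isClosed (hg.congr hFg) hK hC, hFf, hFg⟩

end SphereExtends

section Grid

variable {ι : Type*}

/-- The closed cell with centre `s` of the cubical grid with vertex set `(2ℤ)^ι`: even coordinates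
of `s` are fixed, odd ones range over an interval of radius one. -/
def gridCell (s : ι → ℤ) : Set (ι → ℝ) := {t | ∀ i, |t i - s i| ≤ ((s i % 2 : ℤ) : ℝ)}

/-- The relative boundary of a grid cell. -/
def gridCellBoundary (s : ι → ℤ) : Set (ι → ℝ) :=
  {t | t ∈ gridCell s ∧ ∃ i, s i % 2 = 1 ∧ |t i - s i| = 1}

/-- The dimension of a grid cell. -/
def gridDim [Fintype ι] (s : ι → ℤ) : ℕ := (Finset.univ.filter fun i => s i % 2 = 1).card

/-- The cell with centre `s` is a face, possibly improper, of the cell with centre `s'`. -/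
def IsGridFace (s s' : ι → ℤ) : Prop :=
  ∀ i, s i = s' i ∨ s i % 2 = 0 ∧ s' i % 2 = 1 ∧ |s i - s' i| = 1

/-- A finite set of grid cells that contains all faces of its members. -/
def IsGridSubcomplex (S : Finset (ι → ℤ)) : Prop := ∀ s ∈ S, ∀ s', IsGridFace s' s → s' ∈ S

/-- The union of a finite set of grid cells. -/
def gridUnion (S : Finset (ι → ℤ)) : Set (ι → ℝ) := ⋃ s ∈ S, gridCell s

theorem mem_gridUnion {S : Finset (ι → ℤ)} {t : ι → ℝ} :
    t ∈ gridUnion S ↔ ∃ s ∈ S, t ∈ gridCell s := by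
  simp only [gridUnion, mem_iUnion, exists_prop]

theorem center_mem_gridCell (s : ι → ℤ) : (fun i => (s i : ℝ)) ∈ gridCell s := fun i => by
  rw [sub_self, abs_zero]
  exact_mod_cast Int.emod_nonneg (s i) two_ne_zero

theorem isClosed_gridCell (s : ι → ℤ) : IsClosed (gridCell s) := by
  simp only [gridCell, ofPred_forall]
  exact isClosed_iInter fun i => isClosed_le (by fun_prop) continuous_const

theorem isClosed_gridUnion (S : Finset (ι → ℤ)) : IsClosed (gridUnion S) :=
  S.finite_toSet.isClosed_biUnion fun s _ => isClosed_gridCell s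

theorem eq_of_mem_gridCell_of_even {s : ι → ℤ} {t : ι → ℝ} (ht : t ∈ gridCell s) {i : ι}
    (hi : s i % 2 = 0) : t i = s i := by
  simpa [hi, sub_eq_zero] using ht i

theorem abs_sub_le_one_of_mem_gridCell {s : ι → ℤ} {t : ι → ℝ} (ht : t ∈ gridCell s) (i : ι) :
    |t i - s i| ≤ 1 :=
  (ht i).trans (by exact_mod_cast Int.lt_add_one_iff.1 (Int.emod_lt_of_pos (s i) two_pos))

theorem IsGridFace.gridCell_subset {s s' : ι → ℤ} (h : IsGridFace s s') :
    gridCell s ⊆ gridCell s' := by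
  intro t ht i
  rcases h i with hi | ⟨hs, hs', hi⟩
  · exact hi ▸ ht i
  · rw [eq_of_mem_gridCell_of_even ht hs, hs']
    exact_mod_cast hi.le

theorem IsGridFace.gridDim_lt [Fintype ι] {s s' : ι → ℤ} (h : IsGridFace s s') (hne : s ≠ s') :
    gridDim s < gridDim s' := by
  obtain ⟨i, hi⟩ := Function.ne_iff.1 hne
  have hi' := (h i).resolve_left hi
  refine Finset.card_lt_card ((Finset.ssubset_iff_of_subset fun k hk => ?_).2
    ⟨i, by simp [hi'.2.1], by simp [hi'.1]⟩)
  simp only [Finset.mem_filter_univ] at hk ⊢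
  rcases h k with hk' | ⟨-, hk', -⟩
  exacts [hk' ▸ hk, hk']

theorem eq_or_of_abs_sub_le_emod_two {m n : ℤ} {x : ℝ} (hm : |x - m| ≤ ((m % 2 : ℤ) : ℝ))
    (hn : |x - n| ≤ ((n % 2 : ℤ) : ℝ)) (hx : m % 2 = 1 → |x - m| ≠ 1) :
    m = n ∨ m % 2 = 0 ∧ n % 2 = 1 ∧ |m - n| = 1 := by
  have hmn : (|m - n| : ℝ) ≤ |x - m| + |x - n| := by
    rw [abs_sub_comm x m]; exact abs_sub_le _ _ _
  rcases Int.emod_two_eq_zero_or_one m with hm0 | hm1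
  · have : |m - n| ≤ n % 2 := by
      rw [hm0, Int.cast_zero] at hm
      exact_mod_cast (by linarith : (|m - n| : ℝ) ≤ ((n % 2 : ℤ) : ℝ))
    rcases Int.emod_two_eq_zero_or_one n with hn0 | hn1 <;> grind
  · have hlt : |x - m| < 1 := lt_of_le_of_ne (by simpa [hm1] using hm) (hx hm1)
    have : |m - n| < 1 + n % 2 := by
      exact_mod_cast (by linarith : (|m - n| : ℝ) < 1 + ((n % 2 : ℤ) : ℝ))
    rcases Int.emod_two_eq_zero_or_one n with hn0 | hn1 <;> grind

theorem isGridFace_of_mem {s s' : ι → ℤ} {t : ι → ℝ} (hs : t ∈ gridCell s)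
    (hb : t ∉ gridCellBoundary s) (hs' : t ∈ gridCell s') : IsGridFace s s' := fun i =>
  eq_or_of_abs_sub_le_emod_two (hs i) (hs' i) fun hi h => hb ⟨hs, i, hi, h⟩

theorem exists_isGridFace_of_mem_boundary {s : ι → ℤ} {t : ι → ℝ} (ht : t ∈ gridCellBoundary s) :
    ∃ s', IsGridFace s' s ∧ s' ≠ s ∧ t ∈ gridCell s' := by
  classical
  obtain ⟨hts, i, hi, hti⟩ := ht
  obtain ⟨z, hz, hzs⟩ : ∃ z : ℤ, t i = z ∧ |z - s i| = 1 := by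
    rcases (abs_eq zero_le_one).1 hti with h | h
    · exact ⟨s i + 1, by push_cast; linarith, by simp⟩
    · exact ⟨s i - 1, by push_cast; linarith, by simp⟩
  have hz_even : z % 2 = 0 := by grind
  refine ⟨Function.update s i z, fun k => ?_, fun h => ?_, fun k => ?_⟩
  · obtain rfl | hk := eq_or_ne k i
    · simp [hz_even, hi, hzs]
    · simp [hk]
  · rw [Function.update_eq_self_iff] at h
    omega
  · obtain rfl | hk := eq_or_ne k i
    · simp [hz, hz_even]
    · simpa [hk] using hts k

theorem IsGridSubcomplex.gridUnion_inter_gridCell_subset {S : Finset (ι → ℤ)}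
    (hS : IsGridSubcomplex S) {s : ι → ℤ} (hs : s ∉ S) :
    gridUnion S ∩ gridCell s ⊆ gridCellBoundary s := by
  rintro t ⟨ht, hts⟩
  obtain ⟨s', hs', hts'⟩ := mem_gridUnion.1 ht
  by_contra hb
  exact hs (hS s' hs' s (isGridFace_of_mem hts hb hts'))

section Chart

variable (s : ι → ℤ)

/-- The standard parametrization of a grid cell by the cube on its odd coordinates. -/
def gridCellParam (u : {i // s i % 2 = 1} → ℝ) : ι → ℝ := fun i =>
  s i + if hi : s i % 2 = 1 then u ⟨i, hi⟩ else 0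

/-- The inverse of `gridCellParam` on the cell. -/
def gridCellCoord (t : ι → ℝ) : {i // s i % 2 = 1} → ℝ := fun k => t k - s k

theorem continuous_gridCellParam : Continuous (gridCellParam s) := by
  refine continuous_pi fun i => ?_
  by_cases hi : s i % 2 = 1 <;> simp only [gridCellParam, hi, dite_true, dite_false] <;> fun_prop

theorem continuous_gridCellCoord : Continuous (gridCellCoord s) := by
  unfold gridCellCoord; fun_prop

theorem gridCellParam_gridCellCoord : LeftInvOn (gridCellParam s) (gridCellCoord s) (gridCell s) :=
  fun t ht => by
    funext i
    rcases Int.emod_two_eq_zero_or_one (s i) with hi | hi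
    · simp [gridCellParam, hi, eq_of_mem_gridCell_of_even ht hi]
    · simp [gridCellParam, gridCellCoord, hi]

theorem exists_norm_apply_eq_norm {κ E : Type*} [Fintype κ] [Nonempty κ] [SeminormedAddGroup E]
    (t : κ → E) : ∃ i, ‖t i‖ = ‖t‖ := by
  obtain ⟨i, hi⟩ := Finite.exists_max fun i => ‖t i‖
  exact ⟨i, le_antisymm (norm_le_pi_norm t i)
    ((pi_norm_le_iff_of_nonneg (norm_nonneg _)).2 hi)⟩

variable [Fintype ι]

theorem mapsTo_gridCellCoord : MapsTo (gridCellCoord s) (gridCell s) (closedBall 0 1) :=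
  fun t ht => by
    rw [mem_closedBall_zero_iff, pi_norm_le_iff_of_nonneg zero_le_one]
    exact fun k => abs_sub_le_one_of_mem_gridCell ht k

theorem mapsTo_gridCellCoord_boundary :
    MapsTo (gridCellCoord s) (gridCellBoundary s) (sphere 0 1) := by
  rintro t ⟨hts, i, hi, hti⟩
  rw [mem_sphere_zero_iff_norm]
  refine le_antisymm (mem_closedBall_zero_iff.1 (mapsTo_gridCellCoord s hts)) (hti ▸ ?_)
  exact norm_le_pi_norm (gridCellCoord s t) ⟨i, hi⟩

theorem mapsTo_gridCellParam : MapsTo (gridCellParam s) (sphere 0 1) (gridCellBoundary s) := by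
  intro u hu
  rw [mem_sphere_zero_iff_norm] at hu
  have : Nonempty {i // s i % 2 = 1} := by
    by_contra hempty
    rw [not_nonempty_iff] at hempty
    simp [Subsingleton.elim u 0] at hu
  obtain ⟨⟨k, hk⟩, hku⟩ := exists_norm_apply_eq_norm u
  refine ⟨fun i => ?_, k, hk, by simpa [gridCellParam, hk, hu] using hku⟩
  rcases Int.emod_two_eq_zero_or_one (s i) with hi | hi
  · simp [gridCellParam, hi]
  · simpa [gridCellParam, hi, hu] using norm_le_pi_norm u ⟨i, hi⟩

end Chart

variable {Y : Type*} [TopologicalSpace Y]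

theorem SphereExtends.exists_extension_gridCell [Fintype ι] {s : ι → ℤ} {A B : Set Y}
    (h : SphereExtends (gridDim s) A B) {f : (ι → ℝ) → Y}
    (hf : ContinuousOn f (gridCellBoundary s)) (hfA : MapsTo f (gridCellBoundary s) A) :
    ∃ g : (ι → ℝ) → Y, ContinuousOn g (gridCell s) ∧ MapsTo g (gridCell s) B ∧
      EqOn g f (gridCellBoundary s) := by
  obtain ⟨g, hg, hgB, hgf⟩ := h.exists_extension_of_card_eq (Fintype.card_subtype _)
    (hf.comp (continuous_gridCellParam s).continuousOn (mapsTo_gridCellParam s))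
    (hfA.comp (mapsTo_gridCellParam s))
  refine ⟨g ∘ gridCellCoord s,
    hg.comp (continuous_gridCellCoord s).continuousOn (mapsTo_gridCellCoord s),
    hgB.comp (mapsTo_gridCellCoord s), fun t ht => ?_⟩
  rw [Function.comp_apply, hgf (mapsTo_gridCellCoord_boundary s ht), Function.comp_apply,
    gridCellParam_gridCellCoord s ht.1]

theorem IsGridSubcomplex.erase [DecidableEq (ι → ℤ)] {S : Finset (ι → ℤ)}
    (hS : IsGridSubcomplex S) {a : ι → ℤ} (ha : ∀ s ∈ S, IsGridFace a s → a = s) :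
    IsGridSubcomplex (S.erase a) := by
  intro s hs s' hs's
  obtain ⟨hsa, hsS⟩ := Finset.mem_erase.1 hs
  refine Finset.mem_erase.2 ⟨?_, hS s hsS s' hs's⟩
  rintro rfl
  exact hsa (ha s hsS hs's).symm

theorem gridUnion_eq_erase_union [DecidableEq (ι → ℤ)] {S : Finset (ι → ℤ)} {a : ι → ℤ}
    (ha : a ∈ S) : gridUnion S = gridUnion (S.erase a) ∪ gridCell a := by
  rw [gridUnion, ← Finset.insert_erase ha, Finset.set_biUnion_insert, union_comm,
    Finset.erase_insert (Finset.notMem_erase a S), gridUnion]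

theorem IsGridSubcomplex.gridCellBoundary_subset [DecidableEq (ι → ℤ)] {S : Finset (ι → ℤ)}
    (hS : IsGridSubcomplex S) {a : ι → ℤ} (ha : a ∈ S) :
    gridCellBoundary a ⊆ gridUnion (S.erase a) := fun t ht => by
  obtain ⟨s', hs', hne, hts'⟩ := exists_isGridFace_of_mem_boundary ht
  exact mem_gridUnion.2 ⟨s', Finset.mem_erase.2 ⟨hne, hS a ha s' hs'⟩, hts'⟩

theorem exists_extension_over_cells [Finite ι] {L S : Finset (ι → ℤ)} (hL : IsGridSubcomplex L)
    (hS : IsGridSubcomplex S) (hLS : L ⊆ S) {f : (ι → ℝ) → Y} (hf : ContinuousOn f (gridUnion L))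
    (C : (ι → ℤ) → (ι → ℝ) → Set Y)
    (hext : ∀ s ∈ S, s ∉ L → ∀ φ : (ι → ℝ) → Y, ContinuousOn φ (gridCellBoundary s) →
      EqOn φ f (gridUnion L ∩ gridCellBoundary s) →
      (∀ s' ∉ L, IsGridFace s' s → s' ≠ s → ∀ t ∈ gridCell s', φ t ∈ C s' t) →
      ∃ ψ : (ι → ℝ) → Y, ContinuousOn ψ (gridCell s) ∧ EqOn ψ φ (gridCellBoundary s) ∧
        ∀ t ∈ gridCell s, ψ t ∈ C s t) :
    ∃ g : (ι → ℝ) → Y, ContinuousOn g (gridUnion S) ∧ EqOn g f (gridUnion L) ∧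
      ∀ s ∈ S, s ∉ L → ∀ t ∈ gridCell s, g t ∈ C s t := by
  classical
  have := Fintype.ofFinite ι
  induction S using Finset.strongInduction with
  | H S ih =>
  obtain hSL | hne := (S \ L).eq_empty_or_nonempty
  · rw [Finset.sdiff_eq_empty_iff_subset] at hSL
    obtain rfl := hSL.antisymm hLS
    exact ⟨f, hf, fun _ _ => rfl, fun s hs hs' => absurd hs hs'⟩
  obtain ⟨a, ha, ha_max⟩ := (S \ L).exists_max_image gridDim hne
  obtain ⟨haS, haL⟩ := Finset.mem_sdiff.1 ha
  have hS' : IsGridSubcomplex (S.erase a) := hS.erase fun s hs has => by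
    by_contra hne
    have hsL : s ∉ L := fun hsL => haL (hL s hsL a has)
    exact (ha_max s (Finset.mem_sdiff.2 ⟨hs, hsL⟩)).not_gt (has.gridDim_lt hne)
  obtain ⟨g, hg, hgf, hgC⟩ := ih (S.erase a) (Finset.erase_ssubset haS) hS'
    (Finset.subset_erase.2 ⟨hLS, haL⟩) fun s hs => hext s (Finset.mem_of_mem_erase hs)
  obtain ⟨ψ, hψ, hψg, hψC⟩ := hext a haS haL g (hg.mono (hS.gridCellBoundary_subset haS))
    (hgf.mono inter_subset_left)
    fun s' hs'L hs' hne => hgC s' (Finset.mem_erase.2 ⟨hne, hS a haS s' hs'⟩) hs'L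
  obtain ⟨F, hF, hFg, hFψ⟩ := exists_continuousOn_union (isClosed_gridUnion _)
    (isClosed_gridCell a) hg hψ fun t ht =>
      (hψg (hS'.gridUnion_inter_gridCell_subset (Finset.notMem_erase a S) ht)).symm
  refine ⟨F, gridUnion_eq_erase_union haS ▸ hF, fun t ht => ?_, fun s hs hsL t ht => ?_⟩
  · have hLS' : gridUnion L ⊆ gridUnion (S.erase a) :=
      biUnion_subset_biUnion_left (Finset.subset_erase.2 ⟨hLS, haL⟩)
    exact (hFg (hLS' ht)).trans (hgf ht)
  · obtain rfl | hsa := eq_or_ne s a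
    · exact hFψ ht ▸ hψC t ht
    · have hsS := Finset.mem_erase.2 ⟨hsa, hs⟩
      rw [hFg (mem_gridUnion.2 ⟨s, hsS, ht⟩)]
      exact hgC s hsS hsL t ht

end Grid

section ControlledExtension

variable {Y : Type*} [MetricSpace Y]

/-- Maps of spheres of dimension less than `q` into `P`, small and near a point of `R`, extend over
the ball to small maps into `P`, uniformly over `R`. -/
def UniformlyExtends (q : ℕ) (R P : Set Y) : Prop :=
  ∀ ε > 0, ∃ δ > 0, ∀ y ∈ R, ∀ j ≤ q, SphereExtends j (ball y δ ∩ P) (ball y ε ∩ P)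

theorem UniformlyExtends.exists_forall {α : Type*} [Finite α] {q : α → ℕ} {R : Set Y}
    {P : α → Set Y} (h : ∀ a, UniformlyExtends (q a) R (P a)) {ε : ℝ} (hε : 0 < ε) :
    ∃ δ > 0, ∀ a, ∀ y ∈ R, ∀ j ≤ q a, SphereExtends j (ball y δ ∩ P a) (ball y ε ∩ P a) := by
  choose δ hδ hδ' using fun a => h a ε hε
  have hsmall : ∀ᶠ x in 𝓝[>] (0 : ℝ), ∀ a, x < δ a := Filter.eventually_all.2 fun a =>
    eventually_nhdsWithin_of_eventually_nhds (Iio_mem_nhds (hδ a))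
  obtain ⟨x, hx, hx0⟩ := (hsmall.and self_mem_nhdsWithin).exists
  exact ⟨x, hx0, fun a y hy j hj =>
    (hδ' a y hy j hj).mono (inter_subset_inter_left _ (ball_subset_ball (hx a).le)) subset_rfl⟩

theorem exists_monotone_radii {good : ℝ → ℝ → Prop}
    (hgood : ∀ x > 0, ∃ y > 0, y ≤ x ∧ good y x) (N : ℕ) {ε : ℝ} (hε : 0 < ε) :
    ∃ e : ℕ → ℝ, (∀ p, 0 < e p) ∧ (∀ p, e p ≤ ε) ∧ Monotone e ∧
      ∀ p < N, good (e p) (e (p + 1)) := by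
  induction N with
  | zero => exact ⟨fun _ => ε, fun _ => hε, fun _ => le_rfl, monotone_const, by simp⟩
  | succ N ih =>
    obtain ⟨e, he_pos, he_le, he_mono, he⟩ := ih
    obtain ⟨y, hy, hye, hgood_y⟩ := hgood (e 0) (he_pos 0)
    refine ⟨fun p => p.casesOn y e, fun p => ?_, fun p => ?_, monotone_nat_of_le_succ fun p => ?_,
      fun p hp => ?_⟩
    · cases p with
      | zero => exact hy
      | succ p => exact he_pos p
    · cases p with
      | zero => exact hye.trans (he_le 0)
      | succ p => exact he_le p
    · cases p with
      | zero => exact hye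
      | succ p => exact he_mono p.le_succ
    · cases p with
      | zero => exact hgood_y
      | succ p => exact he p (Nat.succ_lt_succ_iff.1 hp)

theorem SphereExtends.exists_extension_gridCell_near {ι : Type*} [Fintype ι] {s : ι → ℤ}
    {P : Set Y} {ρ : (ι → ℝ) → Y} {x y : ℝ}
    (h : SphereExtends (gridDim s) (ball (ρ fun i => s i) (2 * y) ∩ P)
      (ball (ρ fun i => s i) (x / 2) ∩ P)) (hyx : y ≤ x / 2)
    (hρ : ∀ t ∈ gridCell s, dist (ρ t) (ρ fun i => s i) < y) {φ : (ι → ℝ) → Y}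
    (hφ : ContinuousOn φ (gridCellBoundary s))
    (hφP : ∀ t ∈ gridCellBoundary s, φ t ∈ ball (ρ t) y ∩ P) :
    ∃ ψ : (ι → ℝ) → Y, ContinuousOn ψ (gridCell s) ∧ EqOn ψ φ (gridCellBoundary s) ∧
      ∀ t ∈ gridCell s, ψ t ∈ ball (ρ t) x ∩ P := by
  obtain ⟨ψ, hψ, hψP, hψφ⟩ := h.exists_extension_gridCell hφ fun t ht => by
    refine ⟨mem_ball.2 ?_, (hφP t ht).2⟩
    calc dist (φ t) (ρ fun i => s i) ≤ dist (φ t) (ρ t) + dist (ρ t) (ρ fun i => s i) :=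
          dist_triangle _ _ _
      _ < y + y := add_lt_add (mem_ball.1 (hφP t ht).1) (hρ t ht.1)
      _ = 2 * y := by ring
  refine ⟨ψ, hψ, hψφ, fun t ht => ⟨mem_ball.2 ?_, (hψP ht).2⟩⟩
  calc dist (ψ t) (ρ t) ≤ dist (ψ t) (ρ fun i => s i) + dist (ρ t) (ρ fun i => s i) :=
        dist_triangle_right _ _ _
    _ < x / 2 + x / 2 := add_lt_add (mem_ball.1 (hψP ht).1) ((hρ t ht).trans_le hyx)
    _ = x := by ring

-- Extending over a cell enlarges the distance to `ρ`, so there is one radius per dimension, and the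
-- radii are chosen from the top dimension down.
theorem exists_controlled_extension {α : Type*} [Finite α] {q : α → ℕ} {R : Set Y}
    {P : α → Set Y} (hP : ∀ a, UniformlyExtends (q a) R (P a)) {ε : ℝ} (hε : 0 < ε) :
    ∃ η > 0, ∀ {ι : Type} [Fintype ι] {L S : Finset (ι → ℤ)}, IsGridSubcomplex L →
      IsGridSubcomplex S → L ⊆ S → ∀ {l : (ι → ℤ) → α},
      (∀ s ∈ S, s ∉ L → gridDim s ≤ q (l s)) →
      (∀ s s', IsGridFace s' s → P (l s') ⊆ P (l s)) →
      ∀ {f ρ : (ι → ℝ) → Y}, ContinuousOn f (gridUnion L) →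
      (∀ s ∈ S, s ∉ L → ∀ t ∈ gridCell s, ρ t ∈ R ∧ ∀ t' ∈ gridCell s, dist (ρ t) (ρ t') < η) →
      (∀ s ∈ S, s ∉ L → ∀ t ∈ gridUnion L ∩ gridCell s, f t ∈ ball (ρ t) η ∩ P (l s)) →
      ∃ g : (ι → ℝ) → Y, ContinuousOn g (gridUnion S) ∧ EqOn g f (gridUnion L) ∧
        ∀ s ∈ S, s ∉ L → ∀ t ∈ gridCell s, g t ∈ ball (ρ t) ε ∩ P (l s) := by
  obtain ⟨N, hN⟩ : ∃ N, ∀ a, q a < N := by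
    obtain ⟨N, hN⟩ := (Set.finite_range q).bddAbove
    exact ⟨N + 1, fun a => Nat.lt_succ_of_le (hN ⟨a, rfl⟩)⟩
  obtain ⟨e, he_pos, he_le, he_mono, he⟩ := exists_monotone_radii
    (good := fun y x => y ≤ x / 2 ∧ ∀ a, ∀ c ∈ R, ∀ j ≤ q a,
      SphereExtends j (ball c (2 * y) ∩ P a) (ball c (x / 2) ∩ P a)) (fun x hx => by
    obtain ⟨δ, hδ, hext⟩ := UniformlyExtends.exists_forall hP (half_pos hx)
    refine ⟨min (δ / 2) (x / 2), by positivity, (min_le_right _ _).trans (by linarith),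
      min_le_right _ _, fun a c hc j hj => (hext a c hc j hj).mono
        (inter_subset_inter_left _ (ball_subset_ball ?_)) subset_rfl⟩
    linarith [min_le_left (δ / 2) (x / 2)]) N hε
  refine ⟨e 0, he_pos 0, fun {ι} _ {L S} hL hS hLS {l} hdim hl {f ρ} hf hρ hfρ => ?_⟩
  obtain ⟨g, hg, hgf, hgP⟩ := exists_extension_over_cells hL hS hLS hf
    (fun s t => ball (ρ t) (e (gridDim s + 1)) ∩ P (l s)) fun s hs hsL φ hφ hφf hφP => by
      obtain ⟨he_half, hext⟩ := he (gridDim s) ((hdim s hs hsL).trans_lt (hN _))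
      have hcenter := center_mem_gridCell s
      have hext_s := hext (l s) _ (hρ s hs hsL _ hcenter).1 _ (hdim s hs hsL)
      refine hext_s.exists_extension_gridCell_near he_half
        (fun t ht => ((hρ s hs hsL t ht).2 _ hcenter).trans_le (he_mono (Nat.zero_le _)))
        hφ fun t ht => ?_
      by_cases htL : t ∈ gridUnion L
      · rw [hφf ⟨htL, ht⟩]
        exact inter_subset_inter_left _ (ball_subset_ball (he_mono (Nat.zero_le _)))
          (hfρ s hs hsL t ⟨htL, ht.1⟩)
      · obtain ⟨s', hs', hne, hts'⟩ := exists_isGridFace_of_mem_boundary ht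
        have hs'L : s' ∉ L := fun h => htL (mem_gridUnion.2 ⟨s', h, hts'⟩)
        exact inter_subset_inter (ball_subset_ball (he_mono (hs'.gridDim_lt hne)))
          (hl s s' hs') (hφP s' hs'L hs' hne t hts')
  exact ⟨g, hg, hgf, fun s hs hsL t ht =>
    inter_subset_inter_left _ (ball_subset_ball (he_le _)) (hgP s hs hsL t ht)⟩

theorem uniformlyExtends_of_isCompact {q : ℕ} {K P : Set Y} (hK : IsCompact K)
    (h : ∀ y ∈ K, ∀ W ∈ 𝓝 y, ∃ V ∈ 𝓝 y, ∀ j ≤ q, SphereExtends j (V ∩ P) (W ∩ P)) :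
    UniformlyExtends q K P := by
  intro ε hε
  choose V hV hVW using fun y : K => h y y.2 _ (ball_mem_nhds (y : Y) (half_pos hε))
  obtain ⟨δ, hδ, hδV⟩ := lebesgue_number_lemma_of_metric hK
    (c := fun y : K => interior (V y) ∩ ball (y : Y) (ε / 2))
    (fun y => isOpen_interior.inter isOpen_ball)
    (fun y hy => mem_iUnion.2 ⟨⟨y, hy⟩, mem_interior_iff_mem_nhds.2 (hV ⟨y, hy⟩),
      mem_ball_self (half_pos hε)⟩)
  refine ⟨δ, hδ, fun z hz j hj => ?_⟩
  obtain ⟨y, hy⟩ := hδV z hz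
  have hyz : dist (y : Y) z < ε / 2 := mem_ball'.1 (hy (mem_ball_self hδ)).2
  exact (hVW y j hj).mono (inter_subset_inter_left _ fun w hw => interior_subset (hy hw).1)
    (inter_subset_inter_left _ (ball_subset_ball' (by linarith)))

end ControlledExtension

section GridSphere

variable {ι : Type*} [Fintype ι]

theorem gridDim_lt_card_of_even {s : ι → ℤ} {i : ι} (hi : s i % 2 = 0) :
    gridDim s < Fintype.card ι :=
  Finset.card_lt_card ((Finset.ssubset_iff_of_subset (Finset.subset_univ _)).2
    ⟨i, Finset.mem_univ _, by simp [hi]⟩)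

theorem dist_le_two_of_mem_gridCell {s : ι → ℤ} {t t' : ι → ℝ} (ht : t ∈ gridCell s)
    (ht' : t' ∈ gridCell s) : dist t t' ≤ 2 := by
  refine (dist_pi_le_iff zero_le_two).2 fun i => ?_
  have := dist_triangle_right (t i) (t' i) (s i : ℝ)
  rw [Real.dist_eq (t i) (s i), Real.dist_eq (t' i) (s i)] at this
  linarith [abs_sub_le_one_of_mem_gridCell ht i, abs_sub_le_one_of_mem_gridCell ht' i]

theorem exists_abs_sub_le_emod_two (x : ℝ) : ∃ z : ℤ, |x - z| ≤ ((z % 2 : ℤ) : ℝ) ∧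
    ∀ y : ℝ, |y - z| ≤ ((z % 2 : ℤ) : ℝ) → ∀ n : ℤ,
      (x ≤ 2 * n → y ≤ 2 * n) ∧ (2 * n ≤ x → 2 * n ≤ y) := by
  have hfl := Int.floor_le (x / 2)
  have hfl' := Int.lt_floor_add_one (x / 2)
  set w := ⌊x / 2⌋
  obtain hw | hw := hfl.eq_or_lt
  · have hz : 2 * w % 2 = 0 := by omega
    refine ⟨2 * w, ?_, fun y hy => ?_⟩
    · rw [hz, Int.cast_zero, abs_nonpos_iff]
      push_cast
      linarith
    · have hyx : y = x := by
        rw [hz, Int.cast_zero, abs_nonpos_iff] at hy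
        push_cast at hy
        linarith
      exact hyx ▸ fun n => ⟨id, id⟩
  · have hz : (2 * w + 1) % 2 = 1 := by omega
    refine ⟨2 * w + 1, ?_, fun y hy n => ?_⟩
    · rw [hz, abs_le]
      push_cast
      constructor <;> linarith
    · rw [hz, abs_le] at hy
      push_cast at hy
      refine ⟨fun hn => ?_, fun hn => ?_⟩
      · have : (w : ℝ) < n := by linarith
        have : (w + 1 : ℝ) ≤ n := by exact_mod_cast this
        linarith
      · have : (n : ℝ) < w + 1 := by linarith
        have : (n : ℝ) ≤ w := by exact_mod_cast Int.lt_add_one_iff.1 (by exact_mod_cast this)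
        linarith

theorem exists_gridCell_subset_sphere {m : ℕ} (hm : 0 < m) {t : ι → ℝ}
    (ht : t ∈ sphere (0 : ι → ℝ) (2 * m)) :
    ∃ s : ι → ℤ, t ∈ gridCell s ∧ gridCell s ⊆ sphere 0 (2 * m) := by
  rw [mem_sphere_zero_iff_norm] at ht
  have : Nonempty ι := by
    by_contra hempty
    rw [not_nonempty_iff] at hempty
    rw [Subsingleton.elim t 0, norm_zero] at ht
    exact hm.ne (by exact_mod_cast (by linarith : (0 : ℝ) = m))
  obtain ⟨i₀, hi₀⟩ := exists_norm_apply_eq_norm t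
  choose z hz hz_mono using fun i => exists_abs_sub_le_emod_two (t i)
  refine ⟨z, hz, fun u hu => mem_sphere_zero_iff_norm.2 (le_antisymm ?_ ?_)⟩
  · refine (pi_norm_le_iff_of_nonneg (by positivity)).2 fun i => abs_le.2 ?_
    have hti := abs_le.1 (ht ▸ norm_le_pi_norm t i)
    have h₁ := (hz_mono i (u i) (hu i) m).1
    have h₂ := (hz_mono i (u i) (hu i) (-m)).2
    push_cast at h₁ h₂
    exact ⟨by linarith [h₂ (by linarith)], h₁ hti.2⟩
  · refine le_trans (le_abs.2 ?_) (norm_le_pi_norm u i₀)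
    have h₁ := (hz_mono i₀ (u i₀) (hu i₀) m).2
    have h₂ := (hz_mono i₀ (u i₀) (hu i₀) (-m)).1
    push_cast at h₁ h₂
    rcases (abs_eq (by positivity)).1 (hi₀.trans ht) with h | h
    · exact Or.inl (h₁ h.ge)
    · exact Or.inr (by linarith [h₂ (by linarith)])

theorem exists_even_of_gridCell_subset_sphere {m : ℕ} (hm : 0 < m) {s : ι → ℤ}
    (hs : gridCell s ⊆ sphere 0 (2 * m)) : ∃ i, s i % 2 = 0 := by
  have hcenter : ‖fun i => (s i : ℝ)‖ = 2 * m := by simpa using hs (center_mem_gridCell s)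
  by_contra! hodd
  have : ‖fun i => (s i : ℝ)‖ ≤ (2 * m - 1 : ℤ) := by
    refine (pi_norm_le_iff_of_nonneg (by exact_mod_cast (by omega : (0 : ℤ) ≤ 2 * m - 1))).2
      fun i => ?_
    have hi : |s i| ≤ 2 * m := by
      have := norm_le_pi_norm (fun i => (s i : ℝ)) i
      rw [hcenter, Real.norm_eq_abs] at this
      exact_mod_cast this
    have : |s i| ≤ 2 * m - 1 := by grind
    rw [Real.norm_eq_abs]
    exact_mod_cast this
  push_cast at this
  linarith

theorem finite_gridCell_subset_sphere (ι : Type*) [Fintype ι] (m : ℕ) :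
    {s : ι → ℤ | gridCell s ⊆ sphere 0 (2 * m)}.Finite := by
  classical
  refine (Set.finite_Icc (fun _ : ι => -(2 * m : ℤ)) (fun _ => 2 * m)).subset fun s hs => ?_
  have hcenter : ‖fun i => (s i : ℝ)‖ = 2 * m := by simpa using hs (center_mem_gridCell s)
  have hi : ∀ i, |s i| ≤ 2 * m := fun i => by
    have := norm_le_pi_norm (fun i => (s i : ℝ)) i
    rw [hcenter, Real.norm_eq_abs] at this
    exact_mod_cast this
  exact ⟨fun i => (abs_le.1 (hi i)).1, fun i => (abs_le.1 (hi i)).2⟩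

/-- The grid cells that make up the sphere of radius `2 * m` in the sup norm. -/
noncomputable def gridSphere (ι : Type*) [Fintype ι] (m : ℕ) : Finset (ι → ℤ) :=
  (finite_gridCell_subset_sphere ι m).toFinset

theorem mem_gridSphere {m : ℕ} {s : ι → ℤ} :
    s ∈ gridSphere ι m ↔ gridCell s ⊆ sphere 0 (2 * m) :=
  Set.Finite.mem_toFinset _

theorem isGridSubcomplex_gridSphere (m : ℕ) : IsGridSubcomplex (gridSphere ι m) :=
  fun _ hs _ hs' => mem_gridSphere.2 (hs'.gridCell_subset.trans (mem_gridSphere.1 hs))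

theorem gridUnion_gridSphere {m : ℕ} (hm : 0 < m) :
    gridUnion (gridSphere ι m) = sphere 0 (2 * m) := by
  refine Subset.antisymm (iUnion₂_subset fun s hs => mem_gridSphere.1 hs) fun t ht => ?_
  obtain ⟨s, hts, hs⟩ := exists_gridCell_subset_sphere hm ht
  exact mem_gridUnion.2 ⟨s, mem_gridSphere.2 hs, hts⟩

theorem gridDim_lt_card_of_mem_gridSphere {m : ℕ} (hm : 0 < m) {s : ι → ℤ}
    (hs : s ∈ gridSphere ι m) : gridDim s < Fintype.card ι :=
  have ⟨_, hi⟩ := exists_even_of_gridCell_subset_sphere hm (mem_gridSphere.1 hs)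
  gridDim_lt_card_of_even hi

end GridSphere

section GridPrism

variable {ι : Type*}

open Classical in
/-- The prism `[0, 2] × K` over a set of grid cells `K`, with the interval as coordinate `none`. -/
noncomputable def gridPrism (K : Finset (ι → ℤ)) : Finset (Option ι → ℤ) :=
  (Finset.Icc 0 2 ×ˢ K).image fun p o => o.elim p.1 p.2

theorem mem_gridPrism {K : Finset (ι → ℤ)} {s : Option ι → ℤ} :
    s ∈ gridPrism K ↔ s none ∈ Icc 0 2 ∧ s ∘ some ∈ K := by
  simp only [gridPrism, Finset.mem_image, Finset.mem_product, Finset.mem_Icc, mem_Icc]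
  constructor
  · rintro ⟨p, hp, rfl⟩
    exact hp
  · exact fun hs => ⟨(s none, s ∘ some), hs, funext fun o => by cases o <;> rfl⟩

theorem elim_mem_gridPrism {K : Finset (ι → ℤ)} {a : ℤ} {s : ι → ℤ} (ha : a ∈ Icc 0 2)
    (hs : s ∈ K) : (fun o : Option ι => o.elim a s) ∈ gridPrism K :=
  mem_gridPrism.2 ⟨ha, hs⟩

theorem IsGridFace.comp_some {s s' : Option ι → ℤ} (h : IsGridFace s s') :
    IsGridFace (s ∘ some) (s' ∘ some) := fun i => h (some i)

theorem isGridSubcomplex_gridPrism {K : Finset (ι → ℤ)} (hK : IsGridSubcomplex K) :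
    IsGridSubcomplex (gridPrism K) := by
  intro s hs s' hs'
  obtain ⟨⟨h0, h2⟩, hsK⟩ := mem_gridPrism.1 hs
  refine mem_gridPrism.2 ⟨?_, hK _ hsK _ hs'.comp_some⟩
  rcases hs' none with h | h <;> constructor <;> grind

theorem gridDim_option [Fintype ι] (s : Option ι → ℤ) :
    gridDim s = (if s none % 2 = 1 then 1 else 0) + gridDim (s ∘ some) := by
  simp only [gridDim, Finset.card_filter, Fintype.sum_option, Function.comp_apply]

theorem comp_some_mem_gridCell {s : Option ι → ℤ} {t : Option ι → ℝ} (ht : t ∈ gridCell s) :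
    t ∘ some ∈ gridCell (s ∘ some) := fun i => ht (some i)

theorem elim_mem_gridCell {a : ℤ} {s : ι → ℤ} {x : ℝ} {t : ι → ℝ}
    (hx : |x - a| ≤ ((a % 2 : ℤ) : ℝ)) (ht : t ∈ gridCell s) :
    (fun o : Option ι => o.elim x t) ∈ gridCell fun o : Option ι => o.elim a s := fun o => by
  cases o with
  | none => exact hx
  | some i => exact ht i

theorem continuous_option_elim :
    Continuous fun (p : ℝ × (ι → ℝ)) (o : Option ι) => o.elim p.1 p.2 :=
  continuous_pi fun
    | none => continuous_fst
    | some i => (continuous_apply i).comp continuous_snd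

open Classical in
/-- The part `{0} × K ∪ [0, 2] × M` of the prism over `K`, from which a homotopy of a map on `K`
that is stationary on `M` has to be extended. -/
noncomputable def gridPrismBase (K M : Finset (ι → ℤ)) : Finset (Option ι → ℤ) :=
  (gridPrism K).filter fun s => s none = 0 ∨ s ∘ some ∈ M

theorem mem_gridPrismBase {K M : Finset (ι → ℤ)} {s : Option ι → ℤ} :
    s ∈ gridPrismBase K M ↔ s ∈ gridPrism K ∧ (s none = 0 ∨ s ∘ some ∈ M) := by
  classical exact Finset.mem_filter

theorem isGridSubcomplex_gridPrismBase {K M : Finset (ι → ℤ)} (hK : IsGridSubcomplex K)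
    (hM : IsGridSubcomplex M) : IsGridSubcomplex (gridPrismBase K M) := by
  intro s hs s' hs'
  obtain ⟨hsK, hs0⟩ := mem_gridPrismBase.1 hs
  refine mem_gridPrismBase.2 ⟨isGridSubcomplex_gridPrism hK s hsK s' hs', hs0.imp (fun h0 => ?_)
    fun hsM => hM _ hsM _ hs'.comp_some⟩
  rcases hs' none with h | h <;> grind

theorem comp_some_mem_gridUnion {K M : Finset (ι → ℤ)} {t : Option ι → ℝ}
    (ht : t ∈ gridUnion (gridPrismBase K M)) : t ∘ some ∈ gridUnion K :=
  have ⟨_, hs, hts⟩ := mem_gridUnion.1 ht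
  mem_gridUnion.2 ⟨_, (mem_gridPrism.1 (mem_gridPrismBase.1 hs).1).2, comp_some_mem_gridCell hts⟩

theorem comp_some_mem_gridUnion_of_ne_zero {K M : Finset (ι → ℤ)} {t : Option ι → ℝ}
    (ht : t ∈ gridUnion (gridPrismBase K M)) (ht0 : t none ≠ 0) : t ∘ some ∈ gridUnion M := by
  obtain ⟨s, hs, hts⟩ := mem_gridUnion.1 ht
  refine mem_gridUnion.2
    ⟨_, (mem_gridPrismBase.1 hs).2.resolve_left fun h0 => ht0 ?_, comp_some_mem_gridCell hts⟩
  simpa [h0] using eq_of_mem_gridCell_of_even hts (i := none) (by simp [h0])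

theorem elim_mem_gridUnion_gridPrism {K : Finset (ι → ℤ)} {x : ℝ} {t : ι → ℝ}
    (hx : x ∈ Icc (0 : ℝ) 2) (ht : t ∈ gridUnion K) :
    ∃ s ∈ gridPrism K, s none = 1 ∧ (fun o : Option ι => o.elim x t) ∈ gridCell s := by
  obtain ⟨s, hs, hts⟩ := mem_gridUnion.1 ht
  refine ⟨_, elim_mem_gridPrism (a := 1) (by simp) hs, rfl,
    elim_mem_gridCell ?_ hts⟩
  norm_num [abs_le]
  constructor <;> linarith [hx.1, hx.2]

end GridPrism

section Push

variable {Y : Type*} [MetricSpace Y]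

theorem exists_extension_gridPrism {k : ℕ} {R P : Set Y} (hUE : UniformlyExtends (k + 1) R univ)
    (hUE' : UniformlyExtends k R P) {ε : ℝ} (hε : 0 < ε) :
    ∃ η > 0, ∀ {ι : Type} [Fintype ι] {K M : Finset (ι → ℤ)}, IsGridSubcomplex K →
      IsGridSubcomplex M → (∀ s ∈ K, gridDim s ≤ k) → ∀ {f ρ : (ι → ℝ) → Y},
      ContinuousOn f (gridUnion K) → MapsTo f (gridUnion M) P →
      (∀ s ∈ K, s ∉ M → ∀ t ∈ gridCell s, ρ t ∈ R ∧ dist (f t) (ρ t) < η ∧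
        ∀ t' ∈ gridCell s, dist (ρ t) (ρ t') < η) →
      ∃ g : (Option ι → ℝ) → Y, ContinuousOn g (gridUnion (gridPrism K)) ∧
        EqOn g (fun t => f (t ∘ some)) (gridUnion (gridPrismBase K M)) ∧
        ∀ s ∈ gridPrism K, s ∉ gridPrismBase K M → ∀ t ∈ gridCell s,
          dist (g t) (ρ (t ∘ some)) < ε ∧ (s none = 2 → g t ∈ P) := by
  obtain ⟨η, hη, H⟩ := exists_controlled_extension (q := fun b => bif b then k else k + 1)
    (P := fun b => bif b then P else univ) (Bool.forall_bool.2 ⟨hUE, hUE'⟩) hε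
  refine ⟨η, hη, fun {ι} _ {K M} hK hM hdim {f ρ} hf hfM hρ => ?_⟩
  have hρ' {s} (hs : s ∈ gridPrism K) (hsL : s ∉ gridPrismBase K M) {t} (ht : t ∈ gridCell s) :=
    hρ (s ∘ some) (mem_gridPrism.1 hs).2 (fun h => hsL (mem_gridPrismBase.2 ⟨hs, Or.inr h⟩)) _
      (comp_some_mem_gridCell ht)
  obtain ⟨g, hg, hgf, hgP⟩ := H (isGridSubcomplex_gridPrismBase hK hM)
    (isGridSubcomplex_gridPrism hK) (fun s hs => (mem_gridPrismBase.1 hs).1)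
    (l := fun s => decide (s none = 2)) (ρ := fun t => ρ (t ∘ some))
    (fun s hs _ => by
      have := hdim _ (mem_gridPrism.1 hs).2
      by_cases h2 : s none = 2
      · simpa [gridDim_option, h2] using this
      · rw [gridDim_option, decide_eq_false h2, cond_false]
        split_ifs <;> omega)
    (fun s s' hs' => by
      by_cases h2 : s none = 2
      · have h2' : s' none = 2 := by rcases hs' none with h | h <;> grind
        simp [h2, h2']
      · simp [h2])
    (hf.comp (by fun_prop) fun t ht => comp_some_mem_gridUnion ht)
    (fun s hs hsL t ht => ⟨(hρ' hs hsL ht).1, fun t' ht' =>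
      (hρ' hs hsL ht).2.2 _ (comp_some_mem_gridCell ht')⟩)
    (fun s hs hsL t ht => ⟨mem_ball.2 (hρ' hs hsL ht.2).2.1, by
      by_cases h2 : s none = 2
      · have ht2 := eq_of_mem_gridCell_of_even ht.2 (i := none) (by simp [h2])
        simpa [h2] using hfM (comp_some_mem_gridUnion_of_ne_zero ht.1 (by simp [ht2, h2]))
      · simp [h2]⟩)
  exact ⟨g, hg, hgf, fun s hs hsL t ht =>
    ⟨mem_ball.1 (hgP s hs hsL t ht).1, fun h2 => by simpa [h2] using (hgP s hs hsL t ht).2⟩⟩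

-- Extending over the prism over `K`, only the cells at its end `2` have to go to `P`.
theorem exists_homotopy_into_of_grid {k : ℕ} {R P : Set Y} (hUE : UniformlyExtends (k + 1) R univ)
    (hUE' : UniformlyExtends k R P) {ε : ℝ} (hε : 0 < ε) :
    ∃ η > 0, ∀ {ι : Type} [Fintype ι] {K M : Finset (ι → ℤ)}, IsGridSubcomplex K →
      IsGridSubcomplex M → (∀ s ∈ K, gridDim s ≤ k) → ∀ {f ρ : (ι → ℝ) → Y},
      ContinuousOn f (gridUnion K) → MapsTo f (gridUnion M) P →
      (∀ s ∈ K, s ∉ M → ∀ t ∈ gridCell s, ρ t ∈ R ∧ dist (f t) (ρ t) < η ∧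
        ∀ t' ∈ gridCell s, dist (ρ t) (ρ t') < η) →
      ∃ g : (Option ι → ℝ) → Y, ContinuousOn g (gridUnion (gridPrism K)) ∧
        ∀ t ∈ gridUnion K, g (fun o => o.elim 0 t) = f t ∧ g (fun o => o.elim 2 t) ∈ P ∧
          ∀ x ∈ Icc (0 : ℝ) 2, dist (g fun o => o.elim x t) (f t) < ε := by
  obtain ⟨η, hη, H⟩ := exists_extension_gridPrism hUE hUE' (half_pos hε)
  refine ⟨min η (ε / 2), lt_min hη (half_pos hε), fun {ι} _ {K M} hK hM hdim {f ρ} hf hfM hρ => ?_⟩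
  obtain ⟨g, hg, hgf, hgP⟩ := H hK hM hdim hf hfM fun s hs hsM t ht =>
    have h := hρ s hs hsM t ht
    ⟨h.1, h.2.1.trans_le (min_le_left _ _), fun t' ht' => (h.2.2 t' ht').trans_le (min_le_left _ _)⟩
  have hgf' {s : Option ι → ℤ} (hs : s ∈ gridPrismBase K M) {x : ℝ} {t : ι → ℝ}
      (ht : (fun o : Option ι => o.elim x t) ∈ gridCell s) : g (fun o => o.elim x t) = f t :=
    hgf (mem_gridUnion.2 ⟨s, hs, ht⟩)
  refine ⟨g, hg, fun t ht => ?_⟩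
  obtain ⟨s, hs, hts⟩ := mem_gridUnion.1 ht
  refine ⟨?_, ?_, fun x hx => ?_⟩
  · exact hgf' (mem_gridPrismBase.2 ⟨elim_mem_gridPrism (by simp) hs, Or.inl rfl⟩)
      (elim_mem_gridCell (a := 0) (by simp) hts)
  · have hmem := elim_mem_gridCell (a := 2) (x := 2) (by simp) hts
    by_cases hsL : (fun o : Option ι => o.elim 2 s) ∈ gridPrismBase K M
    · rw [hgf' hsL hmem]
      exact hfM (mem_gridUnion.2
        ⟨s, (mem_gridPrismBase.1 hsL).2.resolve_left (by simp), hts⟩)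
    · exact (hgP _ (elim_mem_gridPrism (by simp) hs) hsL _ hmem).2 rfl
  · obtain ⟨s, hs, -, hts⟩ := elim_mem_gridUnion_gridPrism hx ht
    by_cases hsL : s ∈ gridPrismBase K M
    · rw [hgf' hsL hts, dist_self]
      exact hε
    · have hfρ := (hρ _ (mem_gridPrism.1 hs).2 (fun h => hsL (mem_gridPrismBase.2 ⟨hs, Or.inr h⟩)) _
        (comp_some_mem_gridCell hts)).2.1
      calc dist (g fun o => o.elim x t) (f t)
          ≤ dist (g fun o => o.elim x t) (ρ t) + dist (f t) (ρ t) := dist_triangle_right _ _ _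
        _ < ε / 2 + ε / 2 := add_lt_add (hgP s hs hsL _ hts).1
            (hfρ.trans_le (min_le_right _ _))
        _ = ε := add_halves ε

end Push

section Level

variable {Y : Type*}

theorem exists_continuousOn_extension {X : Type*} [TopologicalSpace X] [TopologicalSpace Y]
    [Nonempty Y] {S : Set X} (φ : C(S, Y)) :
    ∃ f : X → Y, ContinuousOn f S ∧ ∀ x : S, f x = φ x := by
  have hφ : ∀ x : S, Function.extend Subtype.val φ (fun _ => Classical.arbitrary Y) x = φ x :=
    fun x => Subtype.val_injective.extend_apply _ _ _
  refine ⟨_, ?_, hφ⟩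
  rw [continuousOn_iff_continuous_domRestrict]
  exact φ.continuous.congr fun x => (hφ x).symm

variable [MetricSpace Y] {ι : Type} [Fintype ι]

theorem exists_fine_gridSphere (φ : C(sphere (0 : ι → ℝ) 1, Y)) [Nonempty Y] {η : ℝ}
    (hη : 0 < η) :
    ∃ m : ℕ, 0 < m ∧ ∃ f : (ι → ℝ) → Y, ContinuousOn f (sphere 0 (2 * m)) ∧
      (∀ x : sphere (0 : ι → ℝ) 1, f ((2 * m : ℝ) • x.1) = φ x) ∧
      (∀ t ∈ sphere (0 : ι → ℝ) (2 * m), ∃ x, f t = φ x) ∧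
      ∀ s ∈ gridSphere ι m, ∀ t ∈ gridCell s, ∀ t' ∈ gridCell s, dist (f t) (f t') < η := by
  obtain ⟨ψ, hψ, hψφ⟩ := exists_continuousOn_extension φ
  obtain ⟨κ, hκ, hφκ⟩ := Metric.uniformContinuous_iff.1
    (CompactSpace.uniformContinuous_of_continuous φ.continuous) η hη
  obtain ⟨n, hn⟩ := exists_nat_one_div_lt hκ
  have hm : (0 : ℝ) < 2 * (n + 1 : ℕ) := by positivity
  have hscale : MapsTo ((2 * (n + 1 : ℕ) : ℝ)⁻¹ • ·) (sphere (0 : ι → ℝ) (2 * (n + 1 : ℕ)))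
      (sphere 0 1) := fun t ht => by
    rw [mem_sphere_zero_iff_norm] at ht ⊢
    rw [norm_smul, ht, norm_inv, Real.norm_of_nonneg hm.le, inv_mul_cancel₀ hm.ne']
  refine ⟨n + 1, n.succ_pos, fun t => ψ ((2 * (n + 1 : ℕ) : ℝ)⁻¹ • t),
    hψ.comp (by fun_prop) hscale, fun x => ?_, fun t ht => ⟨⟨_, hscale ht⟩, hψφ ⟨_, hscale ht⟩⟩,
    fun s hs t ht t' ht' => ?_⟩
  · simp only [smul_smul, inv_mul_cancel₀ hm.ne', one_smul, hψφ]
  · have hst := mem_gridSphere.1 hs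
    have hclose : dist ((2 * (n + 1 : ℕ) : ℝ)⁻¹ • t) ((2 * (n + 1 : ℕ) : ℝ)⁻¹ • t') < κ := calc
      _ = (2 * (n + 1 : ℕ) : ℝ)⁻¹ * dist t t' := by
          rw [dist_smul₀, norm_inv, Real.norm_of_nonneg hm.le]
      _ ≤ (2 * (n + 1 : ℕ) : ℝ)⁻¹ * 2 := by gcongr; exact dist_le_two_of_mem_gridCell ht ht'
      _ = 1 / (n + 1) := by push_cast; field_simp
      _ < κ := hn
    change dist (ψ _) (ψ _) < η
    rw [hψφ ⟨_, hscale (hst ht)⟩, hψφ ⟨_, hscale (hst ht')⟩]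
    exact hφκ hclose

variable [CompactSpace Y] {h : Y → ℝ} (hh : Continuous h) {c : ℝ}

include hh

theorem exists_dist_lt_of_abs_sub_le (c : ℝ) {θ : ℝ} (hθ : 0 < θ) :
    ∃ δ > 0, ∀ y, |h y - c| ≤ δ → ∃ z, h z = c ∧ dist y z < θ := by
  have hK : IsCompact (thickening θ (h ⁻¹' {c}))ᶜ := isOpen_thickening.isClosed_compl.isCompact
  obtain ⟨δ, hδ, hKδ⟩ := hK.exists_forall_le' (f := fun y => |h y - c|) (by fun_prop)
    fun y hy => abs_pos.2 (sub_ne_zero.2 fun hyc => hy (self_subset_thickening hθ _ hyc))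
  refine ⟨δ / 2, half_pos hδ, fun y hy => ?_⟩
  obtain ⟨z, hz, hyz⟩ := mem_thickening_iff.1
    (of_not_not fun hyK => (half_lt_self hδ).not_ge ((hKδ y hyK).trans hy))
  exact ⟨z, hz, hyz⟩

theorem exists_push_of_grid {k : ℕ} (hUE : UniformlyExtends (k + 1) {y | h y = c} univ)
    (hUE' : UniformlyExtends k {y | h y = c} {y | c < h y}) {ε : ℝ} (hε : 0 < ε) :
    ∃ δ > 0, ∃ η > 0, ∀ {K : Finset (ι → ℤ)}, IsGridSubcomplex K → (∀ s ∈ K, gridDim s ≤ k) →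
      ∀ {f : (ι → ℝ) → Y}, ContinuousOn f (gridUnion K) → (∀ t ∈ gridUnion K, c - δ ≤ h (f t)) →
      (∀ s ∈ K, ∀ t ∈ gridCell s, ∀ t' ∈ gridCell s, dist (f t) (f t') < η) →
      ∃ g : (Option ι → ℝ) → Y, ContinuousOn g (gridUnion (gridPrism K)) ∧
        ∀ t ∈ gridUnion K, g (fun o => o.elim 0 t) = f t ∧ c < h (g fun o => o.elim 2 t) ∧
          ∀ x ∈ Icc (0 : ℝ) 2, dist (g fun o => o.elim x t) (f t) < ε := by
  classical
  obtain ⟨η, hη, H⟩ := exists_homotopy_into_of_grid hUE hUE' hε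
  obtain ⟨δ, hδ, hlevel⟩ := exists_dist_lt_of_abs_sub_le hh c (θ := η / 3) (by positivity)
  obtain ⟨κ, hκ, hhκ⟩ := Metric.uniformContinuous_iff.1
    (CompactSpace.uniformContinuous_of_continuous hh) δ hδ
  refine ⟨δ, hδ, min κ (η / 3), by positivity, fun {K} hK hdim {f} hf hfc hosc => ?_⟩
  have : Nonempty Y := ⟨f 0⟩
  choose! ρ hρ hfρ using hlevel
  let M := K.filter fun s => ∀ t ∈ gridCell s, c < h (f t)
  have mem_M {s} : s ∈ M ↔ s ∈ K ∧ ∀ t ∈ gridCell s, c < h (f t) := Finset.mem_filter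
  have hM : IsGridSubcomplex M := fun s hs s' hs' => mem_M.2
    ⟨hK s (mem_M.1 hs).1 s' hs', fun t ht => (mem_M.1 hs).2 t (hs'.gridCell_subset ht)⟩
  have hfM : MapsTo f (gridUnion M) {y | c < h y} := fun t ht => by
    obtain ⟨s, hs, hts⟩ := mem_gridUnion.1 ht
    exact (mem_M.1 hs).2 t hts
  have hlow : ∀ s ∈ K, s ∉ M → ∀ t ∈ gridCell s, |h (f t) - c| ≤ δ := fun s hs hsM t ht => by
    obtain ⟨t₀, ht₀, hc⟩ : ∃ t₀ ∈ gridCell s, h (f t₀) ≤ c := by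
      by_contra! hcon
      exact hsM (mem_M.2 ⟨hs, hcon⟩)
    have hnear := hhκ ((hosc s hs t ht t₀ ht₀).trans_le (min_le_left _ _))
    rw [Real.dist_eq, abs_lt] at hnear
    have := hfc t (mem_gridUnion.2 ⟨s, hs, ht⟩)
    exact abs_le.2 ⟨by linarith, by linarith⟩
  refine H hK hM hdim (ρ := ρ ∘ f) hf hfM fun s hs hsM t ht => ?_
  have hlow_s := hlow s hs hsM
  have hclose := fun t ht => hfρ (f t) (hlow_s t ht)
  refine ⟨hρ _ (hlow_s t ht), (hclose t ht).trans (by linarith), fun t' ht' => ?_⟩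
  calc dist (ρ (f t)) (ρ (f t'))
      ≤ dist (f t) (ρ (f t)) + dist (f t) (f t') + dist (f t') (ρ (f t')) := by
        rw [dist_comm (f t) (ρ (f t))]
        exact dist_triangle4 _ _ _ _
    _ < η / 3 + η / 3 + η / 3 := by
        gcongr
        exacts [hclose t ht, (hosc s hs t ht t' ht').trans_le (min_le_right _ _), hclose t' ht']
    _ = η := add_thirds η

theorem exists_push {k : ℕ} (hUE : UniformlyExtends (k + 1) {y | h y = c} univ)
    (hUE' : UniformlyExtends k {y | h y = c} {y | c < h y}) {ε : ℝ} (hε : 0 < ε) :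
    ∃ δ > 0, ∀ φ : C(sphere (0 : Fin (k + 1) → ℝ) 1, Y), (∀ x, c - δ ≤ h (φ x)) →
      ∃ φ' : C(sphere (0 : Fin (k + 1) → ℝ) 1, Y), (∀ x, c < h (φ' x)) ∧
        ContinuousMap.HomotopicWith φ φ' fun ψ => ∀ x, dist (ψ x) (φ x) < ε := by
  obtain ⟨δ, hδ, η, hη, H⟩ := exists_push_of_grid (ι := Fin (k + 1)) hh hUE hUE' hε
  refine ⟨δ, hδ, fun φ hφ => ?_⟩
  have : Nonempty Y := ⟨φ ⟨fun _ => 1, by simp [pi_norm_const]⟩⟩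
  obtain ⟨m, hm, f, hf, hfφ, hf_range, hosc⟩ := exists_fine_gridSphere φ hη
  have hm' : (0 : ℝ) < 2 * m := by positivity
  have hunion := gridUnion_gridSphere (ι := Fin (k + 1)) hm
  obtain ⟨g, hg, hgf⟩ := H (isGridSubcomplex_gridSphere m)
    (fun s hs => Nat.lt_succ_iff.1 (by simpa using gridDim_lt_card_of_mem_gridSphere hm hs))
    (hunion ▸ hf) (fun t ht => by
      obtain ⟨x, hx⟩ := hf_range t (hunion ▸ ht)
      exact hx ▸ hφ x) hosc
  have hscale (x : sphere (0 : Fin (k + 1) → ℝ) 1) :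
      (2 * m : ℝ) • x.1 ∈ gridUnion (gridSphere (Fin (k + 1)) m) := by
    rw [hunion, mem_sphere_zero_iff_norm, norm_smul, mem_sphere_zero_iff_norm.1 x.2, mul_one,
      Real.norm_of_nonneg hm'.le]
  let F : C(unitInterval × sphere (0 : Fin (k + 1) → ℝ) 1, Y) :=
    ⟨fun p => g fun o => o.elim (2 * p.1.1) ((2 * m : ℝ) • p.2.1), by
      refine hg.comp_continuous (continuous_option_elim.comp (by fun_prop :
        Continuous fun p : unitInterval × sphere (0 : Fin (k + 1) → ℝ) 1 =>
          (2 * p.1.1, (2 * m : ℝ) • p.2.1))) fun p => ?_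
      obtain ⟨s, hs, -, hps⟩ := elim_mem_gridUnion_gridPrism (x := 2 * p.1.1)
        ⟨by linarith [p.1.2.1], by linarith [p.1.2.2]⟩ (hscale p.2)
      exact mem_gridUnion.2 ⟨s, hs, hps⟩⟩
  refine ⟨⟨fun x => F (1, x), by fun_prop⟩, fun x => ?_, ⟨⟨⟨F, fun x => ?_, fun _ => rfl⟩, ?_⟩⟩⟩
  · simpa [F] using (hgf _ (hscale x)).2.1
  · simpa [F, hfφ] using (hgf _ (hscale x)).1
  · intro τ x
    rw [← hfφ x]
    exact (hgf _ (hscale x)).2.2 _ ⟨by linarith [τ.2.1], by linarith [τ.2.2]⟩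

end Level

section Sweep

theorem homotopicWith_mono {X Z : Type*} [TopologicalSpace X] [TopologicalSpace Z]
    {f₀ f₁ : C(X, Z)} {P Q : C(X, Z) → Prop} (h : ContinuousMap.HomotopicWith f₀ f₁ P)
    (hPQ : ∀ f, P f → Q f) : ContinuousMap.HomotopicWith f₀ f₁ Q :=
  have ⟨F⟩ := h
  ⟨⟨F.toHomotopy, fun t => hPQ _ (F.prop' t)⟩⟩

theorem continuousOn_floor_concatenation {D Z : Type*} [TopologicalSpace D] [TopologicalSpace Z]
    {φ : ℕ → C(D, Z)} (F : ∀ i, ContinuousMap.Homotopy (φ i) (φ (i + 1))) (i : ℕ) :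
    ContinuousOn (fun p : ℝ × D =>
      F ⌊p.1⌋₊ (projIcc 0 1 zero_le_one (p.1 - ⌊p.1⌋₊), p.2)) (Icc (i : ℝ) (i + 1) ×ˢ univ) := by
  have hi : Continuous fun p : ℝ × D => F i (projIcc 0 1 zero_le_one (p.1 - i), p.2) := by fun_prop
  refine hi.continuousOn.congr ?_
  rintro ⟨s, x⟩ ⟨⟨his, hsi⟩, -⟩
  dsimp only at his hsi ⊢
  obtain rfl | hlt := hsi.eq_or_lt
  · have hfloor : ⌊(i + 1 : ℝ)⌋₊ = i + 1 := by exact_mod_cast Nat.floor_natCast (R := ℝ) (i + 1)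
    rw [hfloor, Nat.cast_succ, sub_self, add_sub_cancel_left, projIcc_left, projIcc_right]
    exact ((F (i + 1)).apply_zero x).trans ((F i).apply_one x).symm
  · rw [(Nat.floor_eq_iff ((Nat.cast_nonneg i).trans his)).2 ⟨his, hlt⟩]

theorem exists_infinite_concatenation {D Z : Type*} [TopologicalSpace D] [TopologicalSpace Z]
    {φ : ℕ → C(D, Z)} (F : ∀ i, ContinuousMap.Homotopy (φ i) (φ (i + 1))) :
    ∃ G : ℝ × D → Z, ContinuousOn G (Ici 0 ×ˢ univ) ∧ (∀ x, G (0, x) = φ 0 x) ∧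
      ∀ s x, ∃ τ, G (s, x) = F ⌊s⌋₊ (τ, x) := by
  have hA : LocallyFinite fun i : ℕ => Icc (i : ℝ) (i + 1) ×ˢ (univ : Set D) := by
    rintro ⟨s, x⟩
    refine ⟨Iio (⌈s⌉₊ + 1 : ℝ) ×ˢ univ, prod_mem_nhds (Iio_mem_nhds ?_) Filter.univ_mem,
      (Set.finite_Iic (⌈s⌉₊ + 1)).subset ?_⟩
    · exact (Nat.le_ceil s).trans_lt (lt_add_one _)
    · rintro i ⟨⟨s', x'⟩, ⟨his, -⟩, ⟨hs, -⟩⟩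
      exact_mod_cast (his.1.trans_lt hs).le
  have hcover : Ici (0 : ℝ) ×ˢ (univ : Set D) ⊆ ⋃ i : ℕ, Icc (i : ℝ) (i + 1) ×ˢ univ := by
    rintro ⟨s, x⟩ ⟨hs, -⟩
    exact mem_iUnion.2 ⟨⌊s⌋₊, ⟨Nat.floor_le hs, (Nat.lt_floor_add_one s).le⟩, mem_univ _⟩
  exact ⟨_, (hA.continuousOn_iUnion (fun i => isClosed_Icc.prod isClosed_univ)
    (continuousOn_floor_concatenation F)).mono hcover, fun x => by simp, fun s x => ⟨_, rfl⟩⟩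

theorem exists_continuous_cone {E Y : Type*} [NormedAddCommGroup E] [NormedSpace ℝ E]
    [TopologicalSpace Y] {G : ℝ × sphere (0 : E) 1 → Y} (hG : ContinuousOn G (Ici 0 ×ˢ univ))
    {z : Y} (hGz : ∀ U ∈ 𝓝 z, ∀ᶠ s in Filter.atTop, ∀ x, G (s, x) ∈ U) :
    ∃ g : E → Y, Continuous g ∧ ∀ x : sphere (0 : E) 1, g x = G (0, x) := by
  classical
  let p : ({0}ᶜ : Set E) → sphere (0 : E) 1 × Ioi (0 : ℝ) := homeomorphUnitSphereProd E
  let g : E → Y := fun x =>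
    if hx : x ∈ ({0}ᶜ : Set E) then G (max 0 (‖x‖⁻¹ - 1), (p ⟨x, hx⟩).1) else z
  have hg_cone : ContinuousOn g {0}ᶜ := by
    rw [continuousOn_iff_continuous_domRestrict]
    have hp : Continuous fun x : ({0}ᶜ : Set E) => G (max 0 (‖x.1‖⁻¹ - 1), (p x).1) :=
      hG.comp_continuous (.prodMk (continuous_const.max (.sub (.inv₀ (by fun_prop)
        fun x => norm_ne_zero_iff.2 x.2) continuous_const))
        (continuous_fst.comp (homeomorphUnitSphereProd E).continuous))
        fun x => ⟨mem_Ici.2 (le_max_left _ _), mem_univ _⟩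
    exact hp.congr fun x => by simp only [domRestrict_apply, g, dif_pos x.2]
  have hg_apex : ContinuousAt g 0 := by
    rw [continuousAt_iff_punctured_nhds, show g 0 = z from dif_neg (by simp)]
    intro U hU
    have hs : Filter.Tendsto (fun x : E => max 0 (‖x‖⁻¹ - 1)) (𝓝[≠] 0) Filter.atTop :=
      Filter.tendsto_atTop_mono (fun x => le_max_right _ _)
        (Filter.tendsto_atTop_add_const_right _ _
          (tendsto_inv_nhdsGT_zero.comp tendsto_norm_nhdsNE_zero))
    refine Filter.mem_map.2 ?_
    filter_upwards [hs.eventually (hGz U hU), self_mem_nhdsWithin] with x hx hx0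
    simpa only [g, mem_preimage, dif_pos hx0] using hx _
  refine ⟨g, continuous_iff_continuousAt.2 fun x => ?_, fun x => ?_⟩
  · obtain rfl | hx := eq_or_ne x 0
    · exact hg_apex
    · exact hg_cone.continuousAt (isOpen_compl_singleton.mem_nhds hx)
  · have hx : ‖x.1‖ = 1 := norm_eq_of_mem_sphere x
    have hx0 : x.1 ∈ ({0}ᶜ : Set E) := ne_zero_of_mem_unit_sphere x
    have hpx : (p ⟨x, hx0⟩).1 = x := Subtype.ext (by simp [p, hx])
    simp only [g, dif_pos hx0, hpx, hx, inv_one, sub_self, max_self]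

variable {Y : Type*} [MetricSpace Y] [CompactSpace Y] {k : ℕ} {h : Y → ℝ} (hh : Continuous h)

include hh

theorem exists_superlevel_subset {z : Y} (hz : ∀ y, y ≠ z → h y < h z) {U : Set Y} (hU : U ∈ 𝓝 z) :
    ∃ c < h z, ∀ y, c < h y → y ∈ U := by
  obtain ⟨c, hc, hcU⟩ := isOpen_interior.isClosed_compl.isCompact.exists_forall_le'
    hh.neg.continuousOn fun y hy => neg_lt_neg
      (hz y fun hyz => hy (hyz ▸ mem_interior_iff_mem_nhds.2 hU))
  exact ⟨-c, neg_lt.1 hc, fun y hy => interior_subset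
    (of_not_not fun hyU => hy.not_ge (le_neg.1 (hcU y hyU)))⟩

theorem exists_raise {M : ℝ} (hUE : ∀ c < M, UniformlyExtends (k + 1) {y | h y = c} univ)
    (hUE' : ∀ c < M, UniformlyExtends k {y | h y = c} {y | c < h y}) {c₀ c₁ ε : ℝ} (hc₁ : c₁ < M)
    (hε : 0 < ε) (φ : C(sphere (0 : Fin (k + 1) → ℝ) 1, Y)) (hφ : ∀ x, c₀ ≤ h (φ x)) :
    ∃ φ' : C(sphere (0 : Fin (k + 1) → ℝ) 1, Y), (∀ x, c₁ ≤ h (φ' x)) ∧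
      ContinuousMap.HomotopicWith φ φ' fun ψ => ∀ x, c₀ - ε ≤ h (ψ x) := by
  have : Nonempty (sphere (0 : Fin (k + 1) → ℝ) 1) := ⟨⟨fun _ => 1, by simp [pi_norm_const]⟩⟩
  obtain ⟨ε', hε', huc⟩ := Metric.uniformContinuous_iff.1
    (CompactSpace.uniformContinuous_of_continuous hh) ε hε
  let S : Set ℝ := {c | c₀ ≤ c ∧ ∃ φ' : C(sphere (0 : Fin (k + 1) → ℝ) 1, Y),
    (∀ x, c ≤ h (φ' x)) ∧ ContinuousMap.HomotopicWith φ φ' fun ψ => ∀ x, c₀ - ε ≤ h (ψ x)}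
  by_contra hcon
  have hS : ∀ c ∈ S, c ≤ c₁ := by
    rintro c ⟨-, φ', hφ', hφφ'⟩
    by_contra! hc
    exact hcon ⟨φ', fun x => hc.le.trans (hφ' x), hφφ'⟩
  have hc₀ : c₀ ∈ S := ⟨le_rfl, φ, hφ, .refl _ fun x => by linarith [hφ x]⟩
  have hsup : sSup S < M := (csSup_le ⟨_, hc₀⟩ hS).trans_lt hc₁
  obtain ⟨δ, hδ, hpush⟩ := exists_push hh (hUE _ hsup) (hUE' _ hsup) hε'
  obtain ⟨c, ⟨hcc₀, φ₁, hφ₁, hφφ₁⟩, hc⟩ := exists_lt_of_lt_csSup ⟨_, hc₀⟩ (sub_lt_self (sSup S) hδ)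
  obtain ⟨φ₂, hφ₂, hφ₁φ₂⟩ := hpush φ₁ fun x => hc.le.trans (hφ₁ x)
  obtain ⟨x₀, hx₀⟩ := (hh.comp φ₂.continuous).exists_forall_le_of_hasCompactMulSupport
    (.of_compactSpace _)
  refine (hφ₂ x₀).not_ge (le_csSup ⟨c₁, hS⟩ ⟨?_, φ₂, hx₀, hφφ₁.trans
    (homotopicWith_mono hφ₁φ₂ fun ψ hψ x => ?_)⟩)
  · exact (le_csSup ⟨c₁, hS⟩ hc₀).trans (hφ₂ x₀).le
  · have := huc (hψ x)
    rw [Real.dist_eq, abs_lt] at this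
    linarith [this.1, hφ₁ x]

-- Raising to the levels `M - (M - c₀) / (i + 1)` one after the other.
theorem exists_infinite_raise {M c₀ : ℝ} (hc₀ : c₀ < M)
    (hUE : ∀ c < M, UniformlyExtends (k + 1) {y | h y = c} univ)
    (hUE' : ∀ c < M, UniformlyExtends k {y | h y = c} {y | c < h y})
    (φ : C(sphere (0 : Fin (k + 1) → ℝ) 1, Y)) (hφ : ∀ x, c₀ ≤ h (φ x)) :
    ∃ G : ℝ × sphere (0 : Fin (k + 1) → ℝ) 1 → Y, ContinuousOn G (Ici 0 ×ˢ univ) ∧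
      (∀ x, G (0, x) = φ x) ∧ ∀ c < M, ∀ᶠ s in Filter.atTop, ∀ x, c < h (G (s, x)) := by
  have hraise (i : ℕ) (φ : C(sphere (0 : Fin (k + 1) → ℝ) 1, Y))
      (hφ : ∀ x, M - (M - c₀) / (i + 1) ≤ h (φ x)) :=
    exists_raise hh hUE hUE' (c₁ := M - (M - c₀) / (i + 1 + 1)) (ε := 1 / (i + 1))
      (sub_lt_self _ (div_pos (sub_pos.2 hc₀) (by positivity))) (by positivity) φ hφ
  choose next hnext hnext_homotopic using hraise
  let seq (i : ℕ) : {φ : C(sphere (0 : Fin (k + 1) → ℝ) 1, Y) //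
      ∀ x, M - (M - c₀) / (i + 1) ≤ h (φ x)} :=
    i.rec ⟨φ, by simpa using hφ⟩ fun i ψ => ⟨next i ψ.1 ψ.2, by simpa using hnext i ψ.1 ψ.2⟩
  let F (i : ℕ) := (hnext_homotopic i (seq i).1 (seq i).2).some
  obtain ⟨G, hG, hG0, hGF⟩ := exists_infinite_concatenation (φ := fun i => (seq i).1)
    fun i => (F i).toHomotopy
  refine ⟨G, hG, hG0, fun c hc => ?_⟩
  have hlim : Filter.Tendsto (fun s : ℝ => (M - c₀ + 1) * (1 / ((⌊s⌋₊ : ℝ) + 1))) Filter.atTop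
      (𝓝 ((M - c₀ + 1) * 0)) :=
    (tendsto_one_div_add_atTop_nhds_zero_nat.comp tendsto_nat_floor_atTop).const_mul _
  rw [mul_zero] at hlim
  filter_upwards [hlim.eventually_lt_const (sub_pos.2 hc)] with s hs x
  obtain ⟨τ, hτ⟩ := hGF s x
  have hFs := (F ⌊s⌋₊).prop' τ x
  rw [hτ]
  refine lt_of_lt_of_le ?_ hFs
  rw [mul_one_div, add_div] at hs
  linarith

theorem sphereExtends_of_superlevel {z : Y} (hz : ∀ y, y ≠ z → h y < h z)
    (H : ∀ y, y ≠ z → ∀ W ∈ 𝓝 y, ∃ V ∈ 𝓝 y, ∀ j ≤ k + 1, SphereExtends j V W)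
    (H' : ∀ y, y ≠ z → ∀ W ∈ 𝓝 y, ∃ V ∈ 𝓝 y, ∀ j ≤ k,
      SphereExtends j (V ∩ {w | h y < h w}) (W ∩ {w | h y < h w})) :
    SphereExtends (k + 1) (univ : Set Y) univ := by
  intro f hf _
  have hlevel {c : ℝ} (hc : c < h z) : IsCompact {y | h y = c} ∧ ∀ y, h y = c → y ≠ z :=
    ⟨(isClosed_eq hh continuous_const).isCompact, fun y hy hyz => hc.ne (by rw [← hy, hyz])⟩
  let φ : C(sphere (0 : Fin (k + 1) → ℝ) 1, Y) :=
    ⟨fun x => f x, hf.comp_continuous continuous_subtype_val Subtype.property⟩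
  obtain ⟨b, hb⟩ := (isCompact_range (hh.comp φ.continuous)).bddBelow
  obtain ⟨G, hG, hG0, hGM⟩ := exists_infinite_raise hh (M := h z) (c₀ := min b (h z - 1))
    (min_lt_of_right_lt (sub_one_lt _))
    (fun c hc => uniformlyExtends_of_isCompact (hlevel hc).1 fun y hy W hW => by
      simpa using H y ((hlevel hc).2 y hy) W hW)
    (fun c hc => uniformlyExtends_of_isCompact (hlevel hc).1 fun y hy W hW => by
      simpa only [show h y = c from hy] using H' y ((hlevel hc).2 y hy) W hW)
    φ fun x => (min_le_left _ _).trans (hb ⟨x, rfl⟩)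
  obtain ⟨g, hg, hgG⟩ := exists_continuous_cone hG (z := z) fun U hU => by
    obtain ⟨c, hc, hcU⟩ := exists_superlevel_subset hh hz hU
    exact (hGM c hc).mono fun s hs x => hcU _ (hs x)
  exact ⟨g, hg.continuousOn, mapsTo_univ _ _, fun x hx =>
    (hgG ⟨x, hx⟩).trans (hG0 ⟨x, hx⟩)⟩

end Sweep

section Connectivity

variable {κ : Type*}

theorem isClosed_cubeBoundary [Finite κ] : IsClosed (Cube.boundary κ) := by
  simp only [Cube.boundary, ofPred_exists]
  exact isClosed_iUnion_of_finite fun i => .union (isClosed_eq (by fun_prop) continuous_const)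
    (isClosed_eq (by fun_prop) continuous_const)

/-- The rescaling of the unit cube `[0, 1]^κ` to the unit ball `[-1, 1]^κ` of the sup norm. -/
def cubeToBall (u : κ → unitInterval) : κ → ℝ := fun i => 2 * u i - 1

/-- A left inverse of `cubeToBall`, defined everywhere by projecting to the cube. -/
noncomputable def ballToCube (t : κ → ℝ) : κ → unitInterval := fun i =>
  projIcc 0 1 zero_le_one ((t i + 1) / 2)

theorem continuous_cubeToBall : Continuous (cubeToBall (κ := κ)) := by
  unfold cubeToBall
  fun_prop

theorem continuous_ballToCube : Continuous (ballToCube (κ := κ)) := by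
  unfold ballToCube
  fun_prop

theorem ballToCube_cubeToBall (u : κ → unitInterval) : ballToCube (cubeToBall u) = u := by
  ext i
  simp [ballToCube, cubeToBall]

variable [Fintype κ]

theorem ballToCube_mem_boundary [Nonempty κ] {t : κ → ℝ} (ht : ‖t‖ = 1) :
    ballToCube t ∈ Cube.boundary κ := by
  obtain ⟨i, hi⟩ := exists_norm_apply_eq_norm t
  rw [ht, Real.norm_eq_abs, abs_eq zero_le_one] at hi
  refine ⟨i, hi.symm.imp (fun h => ?_) fun h => ?_⟩ <;> simp [ballToCube, h]

theorem cubeToBall_mem_closedBall (u : κ → unitInterval) : cubeToBall u ∈ closedBall 0 1 := by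
  rw [mem_closedBall_zero_iff, pi_norm_le_iff_of_nonneg zero_le_one]
  intro i
  rw [Real.norm_eq_abs, abs_le, cubeToBall]
  constructor <;> linarith [(u i).2.1, (u i).2.2]

theorem cubeToBall_mem_sphere {u : κ → unitInterval} (hu : u ∈ Cube.boundary κ) :
    cubeToBall u ∈ sphere 0 1 := by
  obtain ⟨i, hi⟩ := hu
  have hi1 : ‖cubeToBall u i‖ = 1 := by
    rcases hi with hi | hi <;> norm_num [cubeToBall, hi]
  exact mem_sphere_zero_iff_norm.2 (le_antisymm
    (mem_closedBall_zero_iff.1 (cubeToBall_mem_closedBall u)) (hi1 ▸ norm_le_pi_norm _ i))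

variable {Y : Type*} [TopologicalSpace Y] {k : ℕ}

theorem SphereExtends.exists_extension_cubeBoundary
    (H : SphereExtends (k + 1) (univ : Set Y) univ) {f : (Fin (k + 1) → unitInterval) → Y}
    (hf : ContinuousOn f (Cube.boundary (Fin (k + 1)))) :
    ∃ g : (Fin (k + 1) → unitInterval) → Y, Continuous g ∧ EqOn g f (Cube.boundary _) := by
  obtain ⟨g, hg, -, hgf⟩ := H (f ∘ ballToCube)
    (hf.comp continuous_ballToCube.continuousOn fun t ht =>
      ballToCube_mem_boundary (mem_sphere_zero_iff_norm.1 ht)) (mapsTo_univ _ _)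
  refine ⟨g ∘ cubeToBall, hg.comp_continuous continuous_cubeToBall cubeToBall_mem_closedBall,
    fun u hu => ?_⟩
  rw [Function.comp_apply, hgf (cubeToBall_mem_sphere hu), Function.comp_apply,
    ballToCube_cubeToBall]

theorem mem_cubeBoundary_succ {u : Fin (k + 1) → unitInterval} :
    u ∈ Cube.boundary (Fin (k + 1)) ↔
      u 0 = 0 ∨ u 0 = 1 ∨ Fin.tail u ∈ Cube.boundary (Fin k) := by
  simp only [Cube.boundary, mem_ofPred_eq, Fin.exists_fin_succ, Fin.tail, or_assoc]

theorem SphereExtends.genLoop_homotopic (H : SphereExtends (k + 1) (univ : Set Y) univ) {y : Y}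
    (p q : GenLoop (Fin k) Y y) : GenLoop.Homotopic p q := by
  have htail : Continuous (Fin.tail : (Fin (k + 1) → unitInterval) → Fin k → unitInterval) :=
    continuous_pi fun i => continuous_apply _
  have hK : IsClosed {u : Fin (k + 1) → unitInterval | u 0 = 0} :=
    isClosed_eq (continuous_apply 0) continuous_const
  have hC : IsClosed {u : Fin (k + 1) → unitInterval |
      u 0 = 1 ∨ Fin.tail u ∈ Cube.boundary (Fin k)} :=
    (isClosed_eq (continuous_apply 0) continuous_const).union
      (isClosed_cubeBoundary.preimage htail)
  obtain ⟨f, hf, hfp, hfq⟩ := exists_continuousOn_union hK hC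
    (p.1.continuous.comp htail).continuousOn (q.1.continuous.comp htail).continuousOn (by
      rintro u ⟨hu0 : u 0 = 0, hu1 | hu⟩
      · exact absurd (hu0.symm.trans hu1) zero_ne_one
      · exact (p.2 _ hu).trans (q.2 _ hu).symm)
  obtain ⟨g, hg, hgf⟩ := H.exists_extension_cubeBoundary
    (hf.mono fun u hu => mem_cubeBoundary_succ.1 hu)
  have hgcons (t : unitInterval) (u : Fin k → unitInterval)
      (h : t = 0 ∨ t = 1 ∨ u ∈ Cube.boundary (Fin k)) :
      g (Fin.cons t u) = f (Fin.cons t u) :=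
    hgf (mem_cubeBoundary_succ.2 (by simpa only [Fin.cons_zero, Fin.tail_cons] using h))
  refine ⟨⟨⟨⟨fun x => g (Fin.cons x.1 x.2), hg.comp (by fun_prop)⟩, fun u => ?_, fun u => ?_⟩,
    fun t u hu => ?_⟩⟩
  · exact (hgcons 0 u (.inl rfl)).trans (hfp rfl)
  · exact (hgcons 1 u (.inr (.inl rfl))).trans (hfq (.inl rfl))
  · have hu' : Fin.tail (Fin.cons t u : Fin (k + 1) → unitInterval) ∈ Cube.boundary (Fin k) := hu
    exact (hgcons t u (.inr (.inr hu))).trans ((hfq (.inr hu')).trans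
      ((q.2 _ hu).trans (p.2 _ hu).symm))

theorem spaceMConnected_of_sphereExtends [Nonempty Y] {m : ℕ}
    (H : ∀ k ≤ m, SphereExtends (k + 1) (univ : Set Y) univ) : SpaceMConnected m Y := by
  have hπ (k : ℕ) (hk : k ≤ m) (y : Y) : Subsingleton (HomotopyGroup (Fin k) Y y) :=
    ⟨fun a b => Quotient.inductionOn₂ a b fun p q =>
      Quotient.sound ((H k hk).genLoop_homotopic p q)⟩
  obtain ⟨y⟩ := ‹Nonempty Y›
  have hπ₀ : Subsingleton (ZerothHomotopy Y) :=
    have := hπ 0 m.zero_le y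
    (HomotopyGroup.pi0EquivZerothHomotopy (x := y)).symm.subsingleton
  exact ⟨⟨y⟩, pathConnectedSpace_iff_zerothHomotopy.2 ⟨⟨.mk y⟩, hπ₀⟩, fun k _ hk => hπ k hk⟩

end Connectivity

section Compactification

theorem metrizableSpace_onePoint {E : Type*} [NormedAddCommGroup E] [NormedSpace ℝ E]
    [FiniteDimensional ℝ E] {X : Set E} (hX : IsClosed X) :
    TopologicalSpace.MetrizableSpace (OnePoint X) := by
  have : ProperSpace E := FiniteDimensional.proper ℝ E
  have : LocallyCompactSpace X := hX.isClosedEmbedding_subtypeVal.locallyCompactSpace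
  have : TopologicalSpace.MetrizableSpace (OnePoint E) :=
    (onePointEquivSphereOfFinrankEq (ι := Fin (Module.finrank ℝ E + 1))
      (by simp)).isEmbedding.metrizableSpace
  have hcont : Continuous (OnePoint.map (Subtype.val : X → E)) :=
    OnePoint.continuous_map continuous_subtype_val (by
      simpa only [Filter.coclosedCompact_eq_cocompact] using
        hX.isClosedEmbedding_subtypeVal.tendsto_cocompact)
  have hinj : Function.Injective (OnePoint.map (Subtype.val : X → E)) :=
    Option.map_injective Subtype.val_injective
  exact (hcont.isClosedEmbedding hinj).isEmbedding.metrizableSpace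

theorem SphereExtends.coe_onePoint {E : Type*} [TopologicalSpace E] [Nonempty E] {X S T : Set E}
    {j : ℕ} (h : SphereExtends j (S ∩ X) (T ∩ X)) :
    SphereExtends j (((↑) : X → OnePoint X) '' (Subtype.val ⁻¹' S))
      (((↑) : X → OnePoint X) '' (Subtype.val ⁻¹' T)) := by
  classical
  let i : OnePoint X → E := fun y => y.elim (Classical.arbitrary E) Subtype.val
  let r : E → OnePoint X := fun w =>
    if hw : w ∈ X then ((⟨w, hw⟩ : X) : OnePoint X) else OnePoint.infty
  have hr_coe (x : X) : r x = x := dif_pos x.2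
  have hr : ContinuousOn r X := by
    rw [continuousOn_iff_continuous_domRestrict]
    exact OnePoint.continuous_coe.congr fun x => (hr_coe x).symm
  refine h.of_leftInvOn (i := i) (r := r) ?_ ?_ (hr.mono inter_subset_right) ?_ ?_
  · rintro _ ⟨x, -, rfl⟩
    exact (OnePoint.continuousAt_coe.2 continuous_subtype_val.continuousAt).continuousWithinAt
  · rintro _ ⟨x, hx, rfl⟩
    exact ⟨hx, x.2⟩
  · rintro w ⟨hwT, hwX⟩
    exact ⟨⟨w, hwX⟩, hwT, (hr_coe ⟨w, hwX⟩).symm⟩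
  · rintro _ ⟨x, -, rfl⟩
    exact hr_coe x

section Height

variable {E : Type*} [PseudoMetricSpace E] {X : Set E} {p : E}

/-- A bounded reparametrization of the distance to `p`, with its maximum at infinity. -/
noncomputable def onePointHeight (X : Set E) (p : E) (y : OnePoint X) : ℝ :=
  y.elim 0 fun x => -(1 + dist (x : E) p)⁻¹

theorem continuous_onePointHeight [ProperSpace E] (hX : IsClosed X) :
    Continuous (onePointHeight X p) := by
  refine (OnePoint.continuous_iff _).2 ⟨?_, (Continuous.inv₀ (by fun_prop) fun x => ?_).neg⟩
  · rw [Filter.coclosedCompact_eq_cocompact]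
    have hlim := (Filter.tendsto_atTop_add_const_left _ 1
      ((tendsto_dist_right_cocompact_atTop p).comp
        hX.isClosedEmbedding_subtypeVal.tendsto_cocompact)).inv_tendsto_atTop.neg
    rwa [neg_zero] at hlim
  · positivity

theorem onePointHeight_lt_infty {y : OnePoint X} (hy : y ≠ OnePoint.infty) :
    onePointHeight X p y < onePointHeight X p OnePoint.infty := by
  obtain ⟨x, rfl⟩ := OnePoint.ne_infty_iff_exists.1 hy
  exact neg_lt_zero.2 (inv_pos.2 (by positivity))

theorem onePointHeight_coe_lt_coe {x x' : X} :
    onePointHeight X p x < onePointHeight X p x' ↔ dist (x : E) p < dist (x' : E) p := by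
  change -(1 + dist (x : E) p)⁻¹ < -(1 + dist (x' : E) p)⁻¹ ↔ _
  rw [neg_lt_neg_iff, inv_lt_inv₀ (by positivity) (by positivity), add_lt_add_iff_left]

theorem onePoint_hasBasis_nhds_coe (x : X) : (𝓝 (x : OnePoint X)).HasBasis (fun ε : ℝ => 0 < ε)
    fun ε => ((↑) : X → OnePoint X) '' (Subtype.val ⁻¹' ball (x : E) ε) := by
  rw [OnePoint.nhds_coe_eq]
  exact nhds_basis_ball.map _

end Height

variable {E : Type*} [NormedAddCommGroup E] [NormedSpace ℝ E] [FiniteDimensional ℝ E]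

theorem onePoint_spaceMConnected {X : Set E} (hX : IsClosed X) (p : E) {m : ℕ}
    (H : ∀ x ∈ X, ∀ ε > 0, ∃ δ > 0, ∀ j, SphereExtends j (ball x δ ∩ X) (ball x ε ∩ X))
    (H' : ∀ x ∈ X, ∀ ε > 0, ∃ δ > 0, ∀ j ≤ m, SphereExtends j
      (ball x δ ∩ {w | dist x p < dist w p} ∩ X) (ball x ε ∩ {w | dist x p < dist w p} ∩ X)) :
    SpaceMConnected m (OnePoint X) := by
  have : ProperSpace E := FiniteDimensional.proper ℝ E
  have : LocallyCompactSpace X := hX.isClosedEmbedding_subtypeVal.locallyCompactSpace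
  have := metrizableSpace_onePoint hX
  let : MetricSpace (OnePoint X) := TopologicalSpace.metrizableSpaceMetric _
  refine spaceMConnected_of_sphereExtends fun k hk =>
    sphereExtends_of_superlevel (continuous_onePointHeight hX (p := p))
      (fun y hy => onePointHeight_lt_infty hy) ?_ ?_
  · intro y hy W hW
    obtain ⟨x, rfl⟩ := OnePoint.ne_infty_iff_exists.1 hy
    obtain ⟨ε, hε, hεW⟩ := (onePoint_hasBasis_nhds_coe x).mem_iff.1 hW
    obtain ⟨δ, hδ, hH⟩ := H x x.2 ε hε
    exact ⟨_, (onePoint_hasBasis_nhds_coe x).mem_of_mem hδ,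
      fun j _ => (hH j).coe_onePoint.mono Subset.rfl hεW⟩
  · intro y hy W hW
    obtain ⟨x, rfl⟩ := OnePoint.ne_infty_iff_exists.1 hy
    obtain ⟨ε, hε, hεW⟩ := (onePoint_hasBasis_nhds_coe x).mem_iff.1 hW
    obtain ⟨δ, hδ, hH⟩ := H' x x.2 ε hε
    refine ⟨_, (onePoint_hasBasis_nhds_coe x).mem_of_mem hδ,
      fun j hj => (hH j (hj.trans hk)).coe_onePoint.mono ?_ ?_⟩
    · rintro _ ⟨⟨w, hw, rfl⟩, hxw⟩
      exact ⟨w, ⟨hw, onePointHeight_coe_lt_coe.1 hxw⟩, rfl⟩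
    · rintro _ ⟨w, ⟨hw, hxw⟩, rfl⟩
      exact ⟨hεW ⟨w, hw, rfl⟩, onePointHeight_coe_lt_coe.2 hxw⟩

end Compactification

section Extension

variable {Y : Type*} [TopologicalSpace Y] {j : ℕ}

theorem exists_extension_of_homotopy {B : Set Y} {F : ℝ × (Fin j → ℝ) → Y}
    {g₁ : (Fin j → ℝ) → Y} (hF : ContinuousOn F (Icc 0 1 ×ˢ sphere 0 1))
    (hFB : MapsTo F (Icc 0 1 ×ˢ sphere 0 1) B) (hg₁ : ContinuousOn g₁ (closedBall 0 1))
    (hg₁B : MapsTo g₁ (closedBall 0 1) B) (hFg₁ : ∀ x ∈ sphere 0 1, F (1, x) = g₁ x) :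
    ∃ g : (Fin j → ℝ) → Y, ContinuousOn g (closedBall 0 1) ∧ MapsTo g (closedBall 0 1) B ∧
      ∀ x ∈ sphere 0 1, g x = F (0, x) := by
  let C : Set (Fin j → ℝ) := {x | 1 / 2 ≤ ‖x‖ ∧ ‖x‖ ≤ 1}
  have hC : IsClosed C := (isClosed_le continuous_const continuous_norm).inter
    (isClosed_le continuous_norm continuous_const)
  have hdouble : MapsTo (fun x : Fin j → ℝ => (2 : ℝ) • x) (closedBall 0 (1 / 2))
      (closedBall 0 1) := by
    intro x hx
    rw [mem_closedBall_zero_iff] at hx ⊢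
    rw [norm_smul, Real.norm_ofNat]
    linarith
  have hpolar : MapsTo (fun x : Fin j → ℝ => ((2 - 2 * ‖x‖ : ℝ), ‖x‖⁻¹ • x)) C
      (Icc 0 1 ×ˢ sphere 0 1) := by
    rintro x ⟨hx, hx'⟩
    refine ⟨⟨by dsimp only; linarith, by dsimp only; linarith⟩, mem_sphere_zero_iff_norm.2 ?_⟩
    rw [norm_smul, norm_inv, norm_norm, inv_mul_cancel₀ (by linarith)]
  have hpolar_cont : ContinuousOn (fun x : Fin j → ℝ => ((2 - 2 * ‖x‖ : ℝ), ‖x‖⁻¹ • x)) C :=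
    .prodMk (by fun_prop) (.smul (continuous_norm.continuousOn.inv₀ fun x hx =>
      (half_pos one_pos |>.trans_le hx.1).ne') continuousOn_id)
  obtain ⟨g, hg, hg_ball, hg_shell⟩ := exists_continuousOn_union isClosed_closedBall hC
    (hg₁.comp (by fun_prop) hdouble) (hF.comp hpolar_cont hpolar) (by
      rintro x ⟨hx, hx', -⟩
      have hnorm : ‖x‖ = 1 / 2 := le_antisymm (mem_closedBall_zero_iff.1 hx) hx'
      have hx2 : (2 : ℝ) • x ∈ sphere (0 : Fin j → ℝ) 1 := by
        rw [mem_sphere_zero_iff_norm, norm_smul, Real.norm_ofNat, hnorm,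
          mul_one_div_cancel two_ne_zero]
      simp only [Function.comp_apply, hnorm, ← hFg₁ _ hx2]
      norm_num)
  have hcover : closedBall (0 : Fin j → ℝ) 1 ⊆ closedBall 0 (1 / 2) ∪ C := fun x hx =>
    (le_total ‖x‖ (1 / 2)).imp mem_closedBall_zero_iff.2 fun h =>
      ⟨h, mem_closedBall_zero_iff.1 hx⟩
  refine ⟨g, hg.mono hcover, fun x hx => ?_, fun x hx => ?_⟩
  · rcases hcover hx with h | h
    · exact hg_ball h ▸ hg₁B (hdouble h)
    · exact hg_shell h ▸ hFB (hpolar h)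
  · have hx : ‖x‖ = 1 := mem_sphere_zero_iff_norm.1 hx
    rw [hg_shell ⟨by rw [hx]; norm_num, hx.le⟩, Function.comp_apply, hx, mul_one, sub_self,
      inv_one, one_smul]

theorem SphereExtends.of_deformation {A A' B : Set Y} (h : SphereExtends j A' B) {K : ℝ × Y → Y}
    (hK : ContinuousOn K (Icc 0 1 ×ˢ A)) (hKB : MapsTo K (Icc 0 1 ×ˢ A) B)
    (hK0 : ∀ v ∈ A, K (0, v) = v) (hK1 : ∀ v ∈ A, K (1, v) ∈ A') : SphereExtends j A B := by
  intro f hf hfA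
  have hmaps : MapsTo (Prod.map id f) (Icc (0 : ℝ) 1 ×ˢ sphere 0 1) (Icc 0 1 ×ˢ A) :=
    fun q hq => ⟨hq.1, hfA hq.2⟩
  have hcont : ContinuousOn (Prod.map id f) (Icc (0 : ℝ) 1 ×ˢ sphere 0 1) :=
    continuousOn_id.prodMap hf
  obtain ⟨g₁, hg₁, hg₁B, hg₁f⟩ := h (fun x => K (1, f x))
    (hK.comp (continuousOn_const.prodMk hf) fun x hx => ⟨⟨zero_le_one, le_rfl⟩, hfA hx⟩)
    fun x hx => hK1 _ (hfA hx)
  obtain ⟨g, hg, hgB, hgf⟩ := exists_extension_of_homotopy (hK.comp hcont hmaps) (hKB.comp hmaps)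
    hg₁ hg₁B fun x hx => (hg₁f hx).symm
  exact ⟨g, hg, hgB, fun x hx => (hgf x hx).trans (hK0 _ (hfA hx))⟩

variable {W : Type*} [NormedAddCommGroup W] [NormedSpace ℝ W]

theorem add_smul_sub_ne_zero {w w' : W} (h : ‖w' - w‖ < ‖w‖) {s : ℝ} (hs : s ∈ Icc (0 : ℝ) 1) :
    w + s • (w' - w) ≠ 0 := by
  intro h0
  have hnorm : ‖w‖ = s * ‖w' - w‖ := by
    rw [← Real.norm_of_nonneg hs.1, ← norm_smul, ← norm_neg w, neg_eq_of_add_eq_zero_right h0]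
  linarith [mul_le_of_le_one_left (norm_nonneg (w' - w)) hs.2]

variable [FiniteDimensional ℝ W]

-- A smooth approximation of the map misses some point near the origin, by dimension.
theorem exists_nonvanishing_approx (hj : j < Module.finrank ℝ W) {f : (Fin j → ℝ) → W}
    (hf : ContinuousOn f (sphere 0 1)) {μ : ℝ} (hμ : 0 < μ) :
    ∃ P : (Fin j → ℝ) → W, Continuous P ∧ (∀ x, P x ≠ 0) ∧
      ∀ x ∈ sphere 0 1, ‖P x - f x‖ < μ := by
  have : TietzeExtension.{0} W := TietzeExtension.of_tvs ℝ
  obtain ⟨G, hG⟩ := ContinuousMap.exists_restrict_eq isClosed_sphere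
    ⟨_, continuousOn_iff_continuous_domRestrict.1 hf⟩
  have hGf (x) (hx : x ∈ sphere (0 : Fin j → ℝ) 1) : G x = f x := DFunLike.congr_fun hG ⟨x, hx⟩
  obtain ⟨P, hP, hPG, -⟩ := G.continuous.exists_contDiff_approx 1 (continuous_const (y := μ / 2))
    fun _ => half_pos hμ
  have hP1 : ContDiff ℝ 1 P := by simpa using hP
  obtain ⟨q, hqP, hq⟩ := (hP1.dense_compl_range_of_finrank_lt_finrank
    (by simpa using hj)).exists_dist_lt 0 (half_pos hμ)
  rw [dist_zero_left] at hq
  refine ⟨fun x => P x - q, hP.continuous.sub continuous_const,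
    fun x hx => hqP ⟨x, sub_eq_zero.1 hx⟩, fun x hx => ?_⟩
  calc ‖P x - q - f x‖ = ‖P x - f x - q‖ := by rw [sub_right_comm]
    _ ≤ ‖P x - f x‖ + ‖q‖ := norm_sub_le _ _
    _ < μ / 2 + μ / 2 := by
      gcongr
      rw [← hGf x hx, ← dist_eq_norm]
      exact hPG x
    _ = μ := add_halves μ

theorem sphereExtends_compl_zero (hj : j < Module.finrank ℝ W) :
    SphereExtends j ({0}ᶜ : Set W) {0}ᶜ := by
  intro f hf hf0
  obtain ⟨μ, hμ, hμf⟩ := (isCompact_sphere 0 1).exists_forall_le' hf.norm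
    fun x hx => norm_pos_iff.2 (hf0 hx)
  obtain ⟨P, hP, hP0, hPf⟩ := exists_nonvanishing_approx hj hf hμ
  have hfst : ContinuousOn (fun z : ℝ × (Fin j → ℝ) => f z.2) (Icc 0 1 ×ˢ sphere 0 1) :=
    hf.comp continuousOn_snd fun z hz => hz.2
  obtain ⟨g, hg, hgB, hgf⟩ := exists_extension_of_homotopy (B := {0}ᶜ)
    (F := fun z => f z.2 + z.1 • (P z.2 - f z.2))
    (hfst.add (continuousOn_fst.smul ((hP.comp continuous_snd).continuousOn.sub hfst)))
    (fun z hz => add_smul_sub_ne_zero ((hPf _ hz.2).trans_le (hμf _ hz.2)) hz.1)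
    hP.continuousOn (fun x _ => hP0 x) (fun x _ => by simp)
  exact ⟨g, hg, hgB, fun x hx => by simpa using hgf x hx⟩

end Extension

/-! ### The linear locus -/

section LinearLocus

/-- The indices at which a family of real numbers is maximal. -/
def maximizers {κ : Type*} (φ : κ → ℝ) : Set κ := {i | ∀ k, φ k ≤ φ i}

variable {V : Type*} [NormedAddCommGroup V] [NormedSpace ℝ V] {J : Type*} {I : J → Type*}

/-- The local model of the intersection of the bend loci: the locus at which, for each colour `j`,
the maximum of the linear forms `ℓ j i` is attained at least twice. -/
def linLocus (ℓ : ∀ j, I j → V →L[ℝ] ℝ) : Set V :=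
  {v | ∀ j, (maximizers fun i => ℓ j i v).Nontrivial}

theorem zero_mem_linLocus [∀ j, Nontrivial (I j)] (ℓ : ∀ j, I j → V →L[ℝ] ℝ) :
    0 ∈ linLocus ℓ := fun j => by
  simpa [maximizers] using nontrivial_univ (α := I j)

variable {ℓ : ∀ j, I j → V →L[ℝ] ℝ}

theorem smul_mem_linLocus {v : V} (hv : v ∈ linLocus ℓ) {s : ℝ} (hs : 0 ≤ s) :
    s • v ∈ linLocus ℓ := fun j =>
  (hv j).mono fun i hi k => by
    simpa only [map_smul, smul_eq_mul] using mul_le_mul_of_nonneg_left (hi k) hs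

theorem starConvex_linLocus : StarConvex ℝ 0 (linLocus ℓ) :=
  starConvex_zero_iff.2 fun _ hv _ hs _ => smul_mem_linLocus hv hs

theorem add_mem_linLocus_of_forall_eq {v w : V} (hv : v ∈ linLocus ℓ)
    (hw : ∀ j i i', ℓ j i w = ℓ j i' w) : v + w ∈ linLocus ℓ := fun j =>
  (hv j).mono fun i hi k => by
    simpa only [map_add, hw j k i, add_le_add_iff_right] using hi k

variable [∀ j, Fintype (I j)] [∀ j, Nonempty (I j)]

/-- The amount by which the form `p` falls short of the maximum over the forms of its colour. -/
noncomputable def gap (ℓ : ∀ j, I j → V →L[ℝ] ℝ) (p : Σ j, I j) (v : V) : ℝ :=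
  Finset.univ.sup' Finset.univ_nonempty (fun i => ℓ p.1 i v) - ℓ p.1 p.2 v

theorem continuous_gap (p : Σ j, I j) : Continuous (gap ℓ p) :=
  (Continuous.finset_sup'_apply _ fun i _ => (ℓ p.1 i).continuous).sub (ℓ p.1 p.2).continuous

theorem gap_nonneg (p : Σ j, I j) (v : V) : 0 ≤ gap ℓ p v :=
  sub_nonneg.2 (Finset.le_sup' (fun i => ℓ p.1 i v) (Finset.mem_univ p.2))

theorem gap_eq_of_mem_maximizers {j : J} {i₀ : I j} {v : V}
    (h : i₀ ∈ maximizers fun i => ℓ j i v) (i : I j) : gap ℓ ⟨j, i⟩ v = ℓ j i₀ v - ℓ j i v :=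
  congrArg (· - ℓ j i v) <| le_antisymm (Finset.sup'_le _ _ fun k _ => h k)
    (Finset.le_sup' (fun i => ℓ j i v) (Finset.mem_univ i₀))

theorem gap_eq_zero_iff {p : Σ j, I j} {v : V} :
    gap ℓ p v = 0 ↔ p.2 ∈ maximizers fun i => ℓ p.1 i v := by
  refine ⟨fun h k => ?_, fun h => by rw [gap_eq_of_mem_maximizers h, sub_self]⟩
  exact (Finset.le_sup' (fun i => ℓ p.1 i v) (Finset.mem_univ k)).trans (sub_eq_zero.1 h).le

theorem exists_gap_eq_zero (ℓ : ∀ j, I j → V →L[ℝ] ℝ) (j : J) (v : V) :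
    ∃ i, gap ℓ ⟨j, i⟩ v = 0 :=
  (Finite.exists_max fun i => ℓ j i v).imp fun _ => gap_eq_zero_iff.2

theorem mem_linLocus_of_gap {v w : V} (hv : v ∈ linLocus ℓ)
    (h : ∀ p, gap ℓ p v = 0 → gap ℓ p w = 0) : w ∈ linLocus ℓ := fun j =>
  (hv j).mono fun i hi => gap_eq_zero_iff.1 (h ⟨j, i⟩ (gap_eq_zero_iff.2 hi))

theorem gap_add {j : J} {v w : V} {t : I j → ℝ} {κ : ℝ} (hw : ∀ i, ℓ j i w = -t i + κ)
    (hnn : ∀ i, 0 ≤ gap ℓ ⟨j, i⟩ v + t i) (hz : ∃ i, gap ℓ ⟨j, i⟩ v + t i = 0) (i : I j) :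
    gap ℓ ⟨j, i⟩ (v + w) = gap ℓ ⟨j, i⟩ v + t i := by
  obtain ⟨i₁, h₁⟩ := hz
  obtain ⟨i₀, h₀⟩ := exists_gap_eq_zero ℓ j v
  have hgap := gap_eq_of_mem_maximizers (gap_eq_zero_iff.1 h₀)
  rw [gap_eq_of_mem_maximizers (i₀ := i₁)]
  · simp only [map_add, hw]
    linarith [hgap i, hgap i₁]
  · intro k
    simp only [map_add, hw]
    linarith [hgap k, hgap i₁, hnn k]

theorem gap_smul (p : Σ j, I j) {s : ℝ} (hs : 0 ≤ s) (v : V) :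
    gap ℓ p (s • v) = s * gap ℓ p v := by
  obtain ⟨i₀, h⟩ := exists_gap_eq_zero ℓ p.1 v
  have hmax := gap_eq_zero_iff.1 h
  rw [gap_eq_of_mem_maximizers hmax, gap_eq_of_mem_maximizers (i₀ := i₀)]
  · simp only [map_smul, smul_eq_mul, mul_sub]
  · intro k
    simpa using mul_le_mul_of_nonneg_left (hmax k) hs

theorem gap_zero (p : Σ j, I j) : gap ℓ p 0 = 0 := by simpa using gap_smul (ℓ := ℓ) p le_rfl (0 : V)

/-- The part of the linear locus on which the forms in `S` are maximal for their colours. -/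
def activeFace (ℓ : ∀ j, I j → V →L[ℝ] ℝ) (S : Set (Σ j, I j)) : Set V :=
  {v ∈ linLocus ℓ | ∀ p ∈ S, gap ℓ p v = 0}

theorem zero_mem_activeFace [∀ j, Nontrivial (I j)] (S : Set (Σ j, I j)) : 0 ∈ activeFace ℓ S :=
  ⟨zero_mem_linLocus ℓ, fun p _ => gap_zero p⟩

theorem starConvex_activeFace (S : Set (Σ j, I j)) : StarConvex ℝ 0 (activeFace ℓ S) := by
  refine starConvex_zero_iff.2 fun v hv s hs _ => ?_
  exact ⟨smul_mem_linLocus hv.1 hs, fun p hp => by rw [gap_smul p hs, hv.2 p hp, mul_zero]⟩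

end LinearLocus

section StarConvex

variable {V : Type*} [NormedAddCommGroup V] [NormedSpace ℝ V]

theorem sphereExtends_of_starConvex {y : V} {T : Set V} (hT : StarConvex ℝ y T) (hy : y ∈ T)
    (j : ℕ) : SphereExtends j T T := by
  refine SphereExtends.of_deformation (A' := {y}) (K := fun q => q.1 • y + (1 - q.1) • q.2)
    ((sphereExtends_singleton y).mono subset_rfl (singleton_subset_iff.2 hy)) (by fun_prop) ?_
    (by simp) (by simp)
  rintro ⟨s, v⟩ ⟨hs, hv⟩
  exact hT hv hs.1 (sub_nonneg.2 hs.2) (add_sub_cancel s 1)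

end StarConvex

section Displacement

variable {V : Type*} [NormedAddCommGroup V] [InnerProductSpace ℝ V] {lam : V →L[ℝ] ℝ}

/-- The exterior of the sphere through the origin whose centre is `-∇lam`. -/
def outside (lam : V →L[ℝ] ℝ) : Set V := {v | 0 < 2 * lam v + ‖v‖ ^ 2}

theorem mem_outside_iff {v : V} : v ∈ outside lam ↔ 0 < 2 * lam v + ‖v‖ ^ 2 := Iff.rfl

theorem add_smul_mem_outside {v n : V} (hv : v ∈ outside lam) (hn : 0 ≤ lam n + ⟪v, n⟫) {s : ℝ}
    (hs : 0 ≤ s) : v + s • n ∈ outside lam := by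
  rw [mem_outside_iff] at hv ⊢
  have hexpand : 2 * lam (v + s • n) + ‖v + s • n‖ ^ 2
      = 2 * lam v + ‖v‖ ^ 2 + 2 * (s * (lam n + ⟪v, n⟫)) + ‖s • n‖ ^ 2 := by
    rw [norm_add_sq_real, inner_smul_right, map_add, map_smul, smul_eq_mul]
    ring
  rw [hexpand]
  positivity

theorem exists_sphereExtends_of_displacement {n : V → V} (hn : Continuous n)
    (hlam : ∀ᶠ v in 𝓝 0, 0 ≤ lam (n v) + ⟪v, n v⟫) {T T₁ T' N : Set V}
    (hT' : ∀ v ∈ T, ∀ s ∈ Icc (0 : ℝ) 1, v + s • n v ∈ T') (hT₁ : ∀ v ∈ T, v + n v ∈ T₁)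
    (hN : N ∈ 𝓝 (n 0)) {ε : ℝ} (hε : 0 < ε) (hnε : n 0 ∈ ball 0 ε) :
    ∃ δ > 0, ∀ j, SphereExtends j (N ∩ T₁ ∩ outside lam) (ball 0 ε ∩ T' ∩ outside lam) →
      SphereExtends j (ball 0 δ ∩ T ∩ outside lam) (ball 0 ε ∩ T' ∩ outside lam) := by
  have hend : Filter.Tendsto (fun v => v + n v) (𝓝 0) (𝓝 (n 0)) :=
    Continuous.tendsto' (by fun_prop) _ _ (zero_add _)
  obtain ⟨δ, hδ, hball⟩ := Metric.eventually_nhds_iff_ball.1 <| hlam.and <|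
    (hend.eventually_mem (Filter.inter_mem hN (isOpen_ball.mem_nhds hnε))).and (ball_mem_nhds 0 hε)
  refine ⟨δ, hδ, fun j h => h.of_deformation (K := fun q => q.2 + q.1 • n q.2)
    (by fun_prop) ?_ (by simp) ?_⟩
  · rintro ⟨s, v⟩ ⟨hs, ⟨hv, hvT⟩, hvo⟩
    obtain ⟨hnv, ⟨-, hendv⟩, hvε⟩ := hball v hv
    refine ⟨⟨?_, hT' v hvT s hs⟩, add_smul_mem_outside hvo hnv hs.1⟩
    simpa using (convex_ball 0 ε).add_smul_sub_mem hvε hendv hs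
  · rintro v ⟨⟨hv, hvT⟩, hvo⟩
    obtain ⟨hnv, ⟨hNv, -⟩, -⟩ := hball v hv
    rw [one_smul]
    exact ⟨⟨hNv, hT₁ v hvT⟩, by simpa using add_smul_mem_outside hvo hnv zero_le_one⟩

theorem exists_sphereExtends_of_direction {T T' : Set V} {u : V} (h0 : 0 ∈ T)
    (hT : StarConvex ℝ 0 T) (hu : ∀ v ∈ T, ∀ t : ℝ, 0 ≤ t → v + t • u ∈ T') (hlam : 0 < lam u)
    {ε : ℝ} (hε : 0 < ε) :
    ∃ δ > 0, ∀ j, SphereExtends j (ball 0 δ ∩ T ∩ outside lam)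
      (ball 0 ε ∩ T' ∩ outside lam) := by
  obtain ⟨τ, hτ, hτε⟩ : ∃ τ > (0 : ℝ), τ • u ∈ ball 0 ε := by
    have hcont : Continuous fun τ : ℝ => τ • u := by fun_prop
    have hlim := (hcont.tendsto' 0 0 (zero_smul ℝ u)).mono_left (nhdsWithin_le_nhds (s := Ioi 0))
    obtain ⟨τ, hτε, hτ⟩ :=
      ((hlim.eventually_mem (ball_mem_nhds 0 hε)).and self_mem_nhdsWithin).exists
    exact ⟨τ, hτ, hτε⟩
  have hnonneg : ∀ᶠ v in 𝓝 0, 0 ≤ lam (τ • u - v) + ⟪v, τ • u - v⟫ := by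
    have hcont : Continuous fun v => lam (τ • u - v) + ⟪v, τ • u - v⟫ := by fun_prop
    refine (hcont.tendsto 0).eventually_const_le ?_
    simpa using mul_pos hτ hlam
  have hT' : ∀ v ∈ T, ∀ s ∈ Icc (0 : ℝ) 1, v + s • (τ • u - v) ∈ T' := fun v hv s hs => by
    convert hu _ (hT.smul_mem hv (sub_nonneg.2 hs.2) (sub_le_self 1 hs.1)) (s * τ)
      (mul_nonneg hs.1 hτ.le) using 1
    module
  have hout : τ • u ∈ outside lam := by
    have : 0 < lam (τ • u) := by simpa using mul_pos hτ hlam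
    rw [mem_outside_iff]
    positivity
  obtain ⟨δ, hδ, h⟩ := exists_sphereExtends_of_displacement (n := fun v => τ • u - v)
    (T₁ := {τ • u}) (by fun_prop) hnonneg hT' (by simp) Filter.univ_mem hε (by simpa using hτε)
  refine ⟨δ, hδ, fun j => h j ?_⟩
  exact (sphereExtends_singleton (τ • u)).mono (fun v hv => hv.1.2) <|
    singleton_subset_iff.2 ⟨⟨hτε, by simpa using hu 0 h0 τ hτ.le⟩, hout⟩

theorem sphereExtends_ball_diff_zero {W : Type*} [NormedAddCommGroup W] [NormedSpace ℝ W]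
    [FiniteDimensional ℝ W] {j : ℕ} (hj : j < Module.finrank ℝ W) {δ : ℝ} (hδ : 0 < δ) :
    SphereExtends j (ball (0 : W) δ \ {0}) (ball (0 : W) δ \ {0}) := by
  let φ : OpenPartialHomeomorph W W := .univBall 0 δ
  have hsource : φ.source = univ := OpenPartialHomeomorph.univBall_source 0 δ
  have htarget : φ.target = ball 0 δ := OpenPartialHomeomorph.univBall_target 0 hδ
  have hφ0 : φ 0 = 0 := OpenPartialHomeomorph.univBall_apply_zero 0 δ
  refine (sphereExtends_compl_zero hj).of_leftInvOn (i := φ.symm) (r := φ)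
    (φ.continuousOn_symm.mono (htarget ▸ sdiff_subset)) (fun v hv h0 => hv.2 ?_)
    (φ.continuousOn.mono (hsource ▸ subset_univ _)) (fun w hw => ⟨?_, fun h0 => hw ?_⟩)
    fun v hv => φ.right_inv (htarget ▸ hv.1)
  · rw [mem_singleton_iff, ← φ.right_inv (x := v) (htarget ▸ hv.1), mem_singleton_iff.1 h0, hφ0]
  · exact htarget ▸ φ.map_source (hsource ▸ mem_univ w)
  · exact φ.injOn (hsource ▸ mem_univ w) (hsource ▸ mem_univ 0) (h0.trans hφ0.symm)

theorem exists_sphereExtends_of_section [FiniteDimensional ℝ V] (E : Submodule ℝ V) {F : Set V}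
    (hF0 : 0 ∈ F) {R : V → V} (hR : Continuous R) (hRF : ∀ v, R v ∈ F) (hRE : ∀ v, R v - v ∈ E)
    (hE : ∀ v ∈ F, ∀ w ∈ F, w - v ∈ E → w = v) {ε : ℝ} (hε : 0 < ε) :
    ∃ δ > 0, ∀ j, j + Module.finrank ℝ E < Module.finrank ℝ V →
      SphereExtends j (ball 0 δ ∩ (F \ {0})) (ball 0 ε ∩ (F \ {0})) := by
  have hRid (v) (hv : v ∈ F) : R v = v := hE v hv _ (hRF v) (hRE v)
  obtain ⟨δ, hδ, hRε⟩ := Metric.mem_nhds_iff.1 <|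
    hR.continuousAt.preimage_mem_nhds (ball_mem_nhds (R 0) hε)
  rw [hRid 0 hF0] at hRε
  let P : V →L[ℝ] Eᗮ := Eᗮ.orthogonalProjectionOnto
  have hPE (v) : P v - v ∈ E := by
    rw [← Submodule.starProjection_apply, Submodule.starProjection_orthogonal_val,
      sub_sub_cancel_left]
    exact E.neg_mem (E.starProjection_apply_mem v)
  have hRP (v) (hv : v ∈ F) : R (P v) = v := by
    refine hE v hv _ (hRF _) ?_
    rw [← sub_add_sub_cancel _ (P v : V)]
    exact E.add_mem (hRE _) (hPE v)
  refine ⟨δ, hδ, fun j hj => ?_⟩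
  have hrank : j < Module.finrank ℝ Eᗮ := by
    have := E.finrank_add_finrank_orthogonal
    omega
  refine (sphereExtends_ball_diff_zero hrank hδ).of_leftInvOn (i := P) (r := fun w => R w)
    P.continuous.continuousOn (fun v hv => ⟨?_, fun h0 => hv.2.2 ?_⟩)
    (by fun_prop) (fun w hw => ⟨hRε ?_, hRF _, fun h0 => hw.2 ?_⟩) fun v hv => hRP v hv.2.1
  · rw [mem_ball_zero_iff]
    exact (Eᗮ.norm_orthogonalProjectionOnto_apply_le v).trans_lt (mem_ball_zero_iff.1 hv.1)
  · rw [mem_singleton_iff, ← hRP v hv.2.1, mem_singleton_iff.1 h0]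
    exact hRid 0 hF0
  · simpa using hw.1
  · have hwE : (w : V) ∈ E := by simpa [mem_singleton_iff.1 h0] using E.neg_mem (hRE w)
    exact Subtype.ext (E.orthogonal_disjoint.le_bot ⟨hwE, w.2⟩)

end Displacement

section DualSystem

variable {V : Type*} [NormedAddCommGroup V] [NormedSpace ℝ V]
  {J : Type*} [Fintype J] {I : J → Type*} [∀ j, Fintype (I j)]

/-- A system of vectors dual to the forms `-ℓ j i`, up to an additive constant for each colour. -/
def IsDualSystem (ℓ : ∀ j, I j → V →L[ℝ] ℝ) (u : (Σ j, I j) → V) : Prop :=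
  ∀ t : (Σ j, I j) → ℝ, ∀ j, ∃ κ : ℝ, ∀ i, ℓ j i (∑ p, t p • u p) = -t ⟨j, i⟩ + κ

variable {ℓ : ∀ j, I j → V →L[ℝ] ℝ} {u : (Σ j, I j) → V} {lam : V →L[ℝ] ℝ}

theorem exists_isDualSystem
    (h : ∀ c : ∀ j, I j → ℝ, ∃ v, ∃ κ : J → ℝ, ∀ j i, ℓ j i v = c j i + κ j) :
    ∃ u, IsDualSystem ℓ u := by
  classical
  choose u κ hu using fun p : Σ j, I j =>
    h fun j i => if (⟨j, i⟩ : Σ j, I j) = p then -1 else 0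
  refine ⟨u, fun t j => ⟨∑ p, t p * κ p j, fun i => ?_⟩⟩
  simp only [map_sum, map_smul, smul_eq_mul, hu, mul_add, Finset.sum_add_distrib]
  simp

theorem IsDualSystem.sum_apply_eq_zero (hu : IsDualSystem ℓ u)
    (hlam : ∀ v, (∀ j i i', ℓ j i v = ℓ j i' v) → lam v = 0) (j : J) :
    ∑ i, lam (u ⟨j, i⟩) = 0 := by
  classical
  have h := hlam (∑ p, (if p.1 = j then 1 else 0 : ℝ) • u p) fun j' i i' => by
    obtain ⟨κ, hκ⟩ := hu (fun p => if p.1 = j then 1 else 0) j'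
    rw [hκ, hκ]
  rw [map_sum, Fintype.sum_sigma, Finset.sum_eq_single j (fun j' _ hj' => by simp [hj'])
    (by simp)] at h
  simpa using h

theorem IsDualSystem.exists_apply_section_eq [∀ j, DecidableEq (I j)] (hu : IsDualSystem ℓ u)
    (σ : ∀ j, I j) (c : J → ℝ) (j : J) :
    ∃ κ : ℝ, ∀ i, ℓ j i (∑ j, c j • u ⟨j, σ j⟩) = -(if i = σ j then c j else 0) + κ := by
  obtain ⟨κ, hκ⟩ := hu (fun p => if p.2 = σ p.1 then c p.1 else 0) j
  refine ⟨κ, fun i => ?_⟩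
  rw [← hκ i, Fintype.sum_sigma]
  simp

variable [∀ j, Nonempty (I j)]

theorem IsDualSystem.gap_add (hu : IsDualSystem ℓ u) (t : (Σ j, I j) → ℝ) {v : V}
    (hnn : ∀ p, 0 ≤ gap ℓ p v + t p) (hz : ∀ j, ∃ i, gap ℓ ⟨j, i⟩ v + t ⟨j, i⟩ = 0)
    (p : Σ j, I j) : gap ℓ p (v + ∑ p, t p • u p) = gap ℓ p v + t p := by
  obtain ⟨κ, hκ⟩ := hu t p.1
  exact _root_.gap_add hκ (fun i => hnn _) (hz p.1) p.2

theorem IsDualSystem.apply_eq_sum (hu : IsDualSystem ℓ u)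
    (hlam : ∀ v, (∀ j i i', ℓ j i v = ℓ j i' v) → lam v = 0) (v : V) :
    lam v = ∑ p, gap ℓ p v * lam (u p) := by
  have h := hlam (v - ∑ p, gap ℓ p v • u p) fun j i i' => by
    obtain ⟨κ, hκ⟩ := hu (fun p => gap ℓ p v) j
    simp only [map_sub, hκ]
    unfold gap
    ring
  simpa [sub_eq_zero] using h

theorem IsDualSystem.add_smul_mem_linLocus (hu : IsDualSystem ℓ u) {v : V} (hv : v ∈ linLocus ℓ)
    {q : Σ j, I j} (hq : {i | i ≠ q.2 ∧ gap ℓ ⟨q.1, i⟩ v = 0}.Nontrivial) {t : ℝ} (ht : 0 ≤ t) :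
    v + t • u q ∈ linLocus ℓ := by
  classical
  have hne : ∀ j, {i | (⟨j, i⟩ : Σ j, I j) ≠ q ∧ gap ℓ ⟨j, i⟩ v = 0}.Nontrivial := by
    obtain ⟨j₀, i₀⟩ := q
    intro j
    by_cases hj : j = j₀
    · subst hj
      exact hq.mono fun i hi => ⟨by simpa using hi.1, hi.2⟩
    · exact (hv j).mono fun i hi => ⟨by simp [hj], gap_eq_zero_iff.2 hi⟩
  have hgap := hu.gap_add (fun p => if p = q then t else 0) (v := v)
    (fun p => add_nonneg (gap_nonneg p v) (by positivity)) fun j =>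
      (hne j).nonempty.imp fun i hi => by simp [hi.1, hi.2]
  have hsum : ∑ p, (if p = q then t else 0) • u p = t • u q := by simp
  rw [hsum] at hgap
  refine fun j => (hne j).mono fun i hi => ?_
  have hgap0 : gap ℓ ⟨j, i⟩ (v + t • u q) = 0 := by rw [hgap, hi.2, if_neg hi.1, add_zero]
  exact gap_eq_zero_iff.1 hgap0

theorem IsDualSystem.gap_add_smul_neg_sum [DecidableEq (Σ j, I j)] (hu : IsDualSystem ℓ u)
    (S : Finset (Σ j, I j)) (v : V) {s : ℝ} (hs : s ∈ Icc (0 : ℝ) 1) (q : Σ j, I j) :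
    gap ℓ q (v + s • -∑ p ∈ S, gap ℓ p v • u p) = (if q ∈ S then 1 - s else 1) * gap ℓ q v := by
  have hsum : s • -∑ p ∈ S, gap ℓ p v • u p
      = ∑ p, (if p ∈ S then -(s * gap ℓ p v) else 0) • u p := by
    simp [ite_smul, Finset.smul_sum, smul_smul]
  rw [hsum, hu.gap_add]
  · split_ifs <;> ring
  · intro p
    have := mul_le_of_le_one_left (gap_nonneg (ℓ := ℓ) p v) hs.2
    split_ifs <;> linarith [gap_nonneg (ℓ := ℓ) p v]
  · exact fun j => (exists_gap_eq_zero ℓ j v).imp fun i hi => by simp [hi]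

end DualSystem

section DualSystem

variable {V : Type*} [NormedAddCommGroup V] [InnerProductSpace ℝ V]
  {J : Type*} [Fintype J] {I : J → Type*} [∀ j, Fintype (I j)]
  {ℓ : ∀ j, I j → V →L[ℝ] ℝ} {u : (Σ j, I j) → V} {lam : V →L[ℝ] ℝ}

theorem eventually_nonneg_add_inner_neg_sum {ι : Type*} {S : Finset ι} {w : ι → V}
    (hS : ∀ p ∈ S, lam (w p) < 0) {c : ι → V → ℝ} (hc : ∀ p v, 0 ≤ c p v) :
    ∀ᶠ v in 𝓝 0, 0 ≤ lam (-∑ p ∈ S, c p v • w p) + ⟪v, -∑ p ∈ S, c p v • w p⟫ := by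
  have hnear : ∀ᶠ v in 𝓝 0, ∀ p ∈ S, 0 ≤ -(lam (w p) + ⟪v, w p⟫) := by
    refine (Filter.eventually_all_finset S).2 fun p hp => ?_
    have hcont : Continuous fun v => -(lam (w p) + ⟪v, w p⟫) := by fun_prop
    exact (hcont.tendsto 0).eventually_const_le (by simpa using hS p hp)
  filter_upwards [hnear] with v hv
  have hexpand : lam (-∑ p ∈ S, c p v • w p) + ⟪v, -∑ p ∈ S, c p v • w p⟫
      = ∑ p ∈ S, c p v * -(lam (w p) + ⟪v, w p⟫) := by
    simp only [map_neg, map_sum, map_smul, smul_eq_mul, inner_neg_right, inner_sum,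
      inner_smul_right, mul_neg, mul_add, Finset.sum_neg_distrib, Finset.sum_add_distrib]
    ring
  rw [hexpand]
  exact Finset.sum_nonneg fun p hp => mul_nonneg (hc p v) (hv p hp)

-- Making the forms of negative derivative maximal increases `lam`.
theorem IsDualSystem.exists_sphereExtends_of_activeFace [∀ j, Nonempty (I j)]
    (hu : IsDualSystem ℓ u) {S : Finset (Σ j, I j)} (hS : ∀ p ∈ S, lam (u p) < 0)
    {ε δ' : ℝ} (hε : 0 < ε) (hδ' : 0 < δ') : ∃ δ > 0, ∀ j,
      SphereExtends j (ball 0 δ' ∩ activeFace ℓ S ∩ outside lam)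
        (ball 0 ε ∩ linLocus ℓ ∩ outside lam) →
      SphereExtends j (ball 0 δ ∩ linLocus ℓ ∩ outside lam)
        (ball 0 ε ∩ linLocus ℓ ∩ outside lam) := by
  classical
  have hcont : Continuous fun v => -∑ p ∈ S, gap ℓ p v • u p :=
    (continuous_finsetSum _ fun p _ => (continuous_gap p).smul continuous_const).neg
  have h0 : -∑ p ∈ S, gap ℓ p 0 • u p = 0 := by simp [gap_zero]
  have hlocus (v) (hv : v ∈ linLocus ℓ) (s) (hs : s ∈ Icc (0 : ℝ) 1) :
      v + s • -∑ p ∈ S, gap ℓ p v • u p ∈ linLocus ℓ :=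
    mem_linLocus_of_gap hv fun q hq => by rw [hu.gap_add_smul_neg_sum S v hs, hq, mul_zero]
  refine exists_sphereExtends_of_displacement hcont
    (eventually_nonneg_add_inner_neg_sum hS gap_nonneg) hlocus (fun v hv => ?_)
    (by rw [h0]; exact ball_mem_nhds 0 hδ') hε (by rw [h0]; exact mem_ball_self hε)
  rw [← one_smul ℝ (-∑ p ∈ S, gap ℓ p v • u p)]
  refine ⟨hlocus v hv 1 ⟨zero_le_one, le_rfl⟩, fun p hp => ?_⟩
  rw [hu.gap_add_smul_neg_sum S v ⟨zero_le_one, le_rfl⟩, if_pos (Finset.mem_coe.1 hp), sub_self,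
    zero_mul]

end DualSystem

section SectionFace

variable {V : Type*} [NormedAddCommGroup V] [NormedSpace ℝ V]
  {J : Type*} {I : J → Type*} [∀ j, Fintype (I j)] [∀ j, Nontrivial (I j)]
  {ℓ : ∀ j, I j → V →L[ℝ] ℝ} {u : (Σ j, I j) → V} {σ : ∀ j, I j}

theorem mem_activeFace_range_iff {v : V} :
    v ∈ activeFace ℓ (range fun j => ⟨j, σ j⟩) ↔
      ∀ j, (∀ k, ℓ j k v ≤ ℓ j (σ j) v) ∧ ∃ i, i ≠ σ j ∧ ℓ j i v = ℓ j (σ j) v := by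
  have hsel : (∀ p ∈ range fun j => (⟨j, σ j⟩ : Σ j, I j), gap ℓ p v = 0) ↔
      ∀ j, σ j ∈ maximizers fun i => ℓ j i v := by
    simp only [forall_mem_range, gap_eq_zero_iff]
  rw [activeFace, mem_sep_iff, hsel]
  constructor
  · rintro ⟨hv, hσ⟩ j
    obtain ⟨i, hi, hne⟩ := (hv j).exists_ne (σ j)
    exact ⟨hσ j, i, hne, le_antisymm (hσ j i) (hi (σ j))⟩
  · refine fun h => ⟨fun j => ?_, fun j => (h j).1⟩
    obtain ⟨hσ, i, hne, hi⟩ := h j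
    exact ⟨i, fun k => (hσ k).trans hi.ge, σ j, hσ, hne⟩

open Classical in
/-- The maximum over the forms of colour `j` other than the selected form `σ j`. -/
noncomputable def otherMax (ℓ : ∀ j, I j → V →L[ℝ] ℝ) (σ : ∀ j, I j) (j : J) (v : V) : ℝ :=
  (Finset.univ.erase (σ j)).sup' ((exists_ne (σ j)).imp fun _ hi => by simp [hi]) fun i => ℓ j i v

theorem continuous_otherMax (j : J) : Continuous (otherMax ℓ σ j) :=
  Continuous.finset_sup'_apply _ fun i _ => (ℓ j i).continuous

theorem le_otherMax {j : J} {i : I j} (hi : i ≠ σ j) (v : V) : ℓ j i v ≤ otherMax ℓ σ j v :=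
  Finset.le_sup' (fun i => ℓ j i v) (by simpa using hi)

theorem exists_eq_otherMax (ℓ : ∀ j, I j → V →L[ℝ] ℝ) (σ : ∀ j, I j) (j : J) (v : V) :
    ∃ i, i ≠ σ j ∧ otherMax ℓ σ j v = ℓ j i v := by
  classical
  obtain ⟨i, hi, h⟩ := Finset.exists_mem_eq_sup' (s := Finset.univ.erase (σ j))
    ((exists_ne (σ j)).imp fun _ hi => by simp [hi]) fun i => ℓ j i v
  exact ⟨i, Finset.ne_of_mem_erase hi, by rw [← h, otherMax]⟩

variable [Fintype J]

/-- The projection along the vectors dual to the selected forms `σ j` onto the face on which these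
forms are maximal. -/
noncomputable def faceProjection (ℓ : ∀ j, I j → V →L[ℝ] ℝ) (u : (Σ j, I j) → V) (σ : ∀ j, I j)
    (v : V) : V :=
  v + ∑ j, (ℓ j (σ j) v - otherMax ℓ σ j v) • u ⟨j, σ j⟩

theorem continuous_faceProjection : Continuous (faceProjection ℓ u σ) :=
  continuous_id.add <| continuous_finsetSum _ fun j _ =>
    ((ℓ j (σ j)).continuous.sub (continuous_otherMax j)).smul continuous_const

theorem faceProjection_sub_mem_span (v : V) :
    faceProjection ℓ u σ v - v ∈ Submodule.span ℝ (range fun j => u ⟨j, σ j⟩) := by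
  rw [faceProjection, add_sub_cancel_left]
  exact Submodule.sum_mem _ fun j _ => Submodule.smul_mem _ _ (Submodule.subset_span ⟨j, rfl⟩)

theorem IsDualSystem.faceProjection_mem (hu : IsDualSystem ℓ u) (v : V) :
    faceProjection ℓ u σ v ∈ activeFace ℓ (range fun j => ⟨j, σ j⟩) := by
  classical
  refine mem_activeFace_range_iff.2 fun j => ?_
  obtain ⟨κ, hκ⟩ := hu.exists_apply_section_eq σ (fun j => ℓ j (σ j) v - otherMax ℓ σ j v) j
  have hsel : ℓ j (σ j) (faceProjection ℓ u σ v) = otherMax ℓ σ j v + κ := by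
    rw [faceProjection, map_add, hκ, if_pos rfl]
    ring
  have hother (k) (hk : k ≠ σ j) : ℓ j k (faceProjection ℓ u σ v) = ℓ j k v + κ := by
    rw [faceProjection, map_add, hκ, if_neg hk]
    ring
  obtain ⟨i, hi, hmax⟩ := exists_eq_otherMax ℓ σ j v
  refine ⟨fun k => ?_, i, hi, by rw [hother i hi, hsel, hmax]⟩
  obtain rfl | hk := eq_or_ne k (σ j)
  · rfl
  · rw [hother k hk, hsel]
    gcongr
    exact le_otherMax hk v

theorem IsDualSystem.eq_of_sub_mem_span (hu : IsDualSystem ℓ u) {v w : V}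
    (hv : v ∈ activeFace ℓ (range fun j => ⟨j, σ j⟩))
    (hw : w ∈ activeFace ℓ (range fun j => ⟨j, σ j⟩))
    (hvw : w - v ∈ Submodule.span ℝ (range fun j => u ⟨j, σ j⟩)) : w = v := by
  classical
  obtain ⟨c, hc⟩ := (Submodule.mem_span_range_iff_exists_fun ℝ).1 hvw
  suffices c = 0 by simpa [this, sub_eq_zero, eq_comm] using hc
  funext j
  obtain ⟨κ, hκ⟩ := hu.exists_apply_section_eq σ c j
  simp only [hc, map_sub] at hκ
  obtain ⟨hvσ, i, hi, hvi⟩ := mem_activeFace_range_iff.1 hv j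
  obtain ⟨hwσ, i', hi', hwi'⟩ := mem_activeFace_range_iff.1 hw j
  have hσ := hκ (σ j)
  have hκi := hκ i
  have hκi' := hκ i'
  rw [if_pos rfl] at hσ
  rw [if_neg hi] at hκi
  rw [if_neg hi'] at hκi'
  rw [Pi.zero_apply]
  linarith [hwσ i, hvσ i']

end SectionFace

section FaceOutside

variable {V : Type*} [NormedAddCommGroup V] [InnerProductSpace ℝ V]
  {J : Type*} [Fintype J] {I : J → Type*} [∀ j, Fintype (I j)] [∀ j, Nontrivial (I j)]
  {ℓ : ∀ j, I j → V →L[ℝ] ℝ} {u : (Σ j, I j) → V} {lam : V →L[ℝ] ℝ}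

theorem IsDualSystem.mem_outside_of_mem_activeFace (hu : IsDualSystem ℓ u)
    (hlam : ∀ v, (∀ j i i', ℓ j i v = ℓ j i' v) → lam v = 0) {S : Set (Σ j, I j)}
    (hS : ∀ p ∉ S, 0 ≤ lam (u p)) {v : V} (hv : v ∈ activeFace ℓ S) (hv0 : v ≠ 0) :
    v ∈ outside lam := by
  have hnonneg : 0 ≤ lam v := by
    rw [hu.apply_eq_sum hlam]
    refine Finset.sum_nonneg fun p _ => ?_
    by_cases hp : p ∈ S
    · rw [hv.2 p hp, zero_mul]
    · exact mul_nonneg (gap_nonneg p v) (hS p hp)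
  have := norm_pos_iff.2 hv0
  rw [mem_outside_iff]
  positivity

theorem IsDualSystem.exists_apply_neg_and_exists_apply_pos (hu : IsDualSystem ℓ u)
    (hlam : ∀ v, (∀ j i i', ℓ j i v = ℓ j i' v) → lam v = 0) {j₀ : J} {v : V}
    (hv : ∀ j, j ≠ j₀ → ∀ i i', ℓ j i v = ℓ j i' v) (hv0 : lam v ≠ 0) :
    (∃ i, lam (u ⟨j₀, i⟩) < 0) ∧ ∃ i, 0 < lam (u ⟨j₀, i⟩) := by
  obtain ⟨i, hi⟩ : ∃ i, lam (u ⟨j₀, i⟩) ≠ 0 := by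
    by_contra! h
    rw [hu.apply_eq_sum hlam] at hv0
    refine hv0 (Finset.sum_eq_zero fun p _ => ?_)
    obtain ⟨j, i⟩ := p
    by_cases hj : j = j₀
    · subst hj
      rw [h i, mul_zero]
    · rw [gap_eq_zero_iff.2 fun k => (hv j hj k i).le, zero_mul]
  have hsum := hu.sum_apply_eq_zero hlam j₀
  constructor
  · obtain ⟨i, -, h⟩ := Finset.exists_pos_of_sum_zero_of_exists_nonzero
      (fun i => -lam (u ⟨j₀, i⟩)) (by rw [Finset.sum_neg_distrib, hsum, neg_zero])
      ⟨i, Finset.mem_univ i, neg_ne_zero.2 hi⟩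
    exact ⟨i, neg_pos.1 h⟩
  · obtain ⟨i, -, h⟩ := Finset.exists_pos_of_sum_zero_of_exists_nonzero _ hsum
      ⟨i, Finset.mem_univ i, hi⟩
    exact ⟨i, h⟩

variable [FiniteDimensional ℝ V]

theorem IsDualSystem.exists_sphereExtends_of_section (hu : IsDualSystem ℓ u)
    (hlam : ∀ v, (∀ j i i', ℓ j i v = ℓ j i' v) → lam v = 0) {σ : ∀ j, I j}
    (hσ : ∀ j i, i ≠ σ j → 0 ≤ lam (u ⟨j, i⟩)) {ε : ℝ} (hε : 0 < ε) :
    ∃ δ > 0, ∀ k, k + Fintype.card J < Module.finrank ℝ V →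
      SphereExtends k (ball 0 δ ∩ activeFace ℓ (range fun j => ⟨j, σ j⟩) ∩ outside lam)
        (ball 0 ε ∩ linLocus ℓ ∩ outside lam) := by
  obtain ⟨δ, hδ, h⟩ := _root_.exists_sphereExtends_of_section
    (Submodule.span ℝ (range fun j => u ⟨j, σ j⟩)) (zero_mem_activeFace _)
    continuous_faceProjection hu.faceProjection_mem faceProjection_sub_mem_span
    (fun v hv w hw => hu.eq_of_sub_mem_span hv hw) hε
  refine ⟨δ, hδ, fun k hk => (h k ?_).mono ?_ ?_⟩
  · have : Module.finrank ℝ (Submodule.span ℝ (range fun j => u ⟨j, σ j⟩)) ≤ Fintype.card J :=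
      finrank_range_le_card _
    omega
  · rintro v ⟨⟨hv, hvF⟩, hvo⟩
    refine ⟨hv, hvF, fun h0 => ?_⟩
    simp [mem_outside_iff, mem_singleton_iff.1 h0] at hvo
  · rintro v ⟨hv, hvF, hv0⟩
    refine ⟨⟨hv, hvF.1⟩, hu.mem_outside_of_mem_activeFace hlam ?_ hvF hv0⟩
    rintro ⟨j, i⟩ hp
    exact hσ j i fun h => hp ⟨j, by rw [h]⟩

-- If two forms of one colour have negative derivative, the face on which they are maximal can be
-- contracted in a direction of positive derivative of the same colour; otherwise the face is a
-- section of a linear projection.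
theorem IsDualSystem.exists_sphereExtends_activeFace (hu : IsDualSystem ℓ u)
    (hlam : ∀ v, (∀ j i i', ℓ j i v = ℓ j i' v) → lam v = 0)
    (hsign : ∀ j, (∃ i, lam (u ⟨j, i⟩) < 0) ∧ ∃ i, 0 < lam (u ⟨j, i⟩)) {ε : ℝ} (hε : 0 < ε) :
    ∃ δ > 0, ∀ k, k + Fintype.card J < Module.finrank ℝ V →
      SphereExtends k (ball 0 δ ∩ activeFace ℓ {p | lam (u p) < 0} ∩ outside lam)
        (ball 0 ε ∩ linLocus ℓ ∩ outside lam) := by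
  by_cases htwo : ∃ j, {i | lam (u ⟨j, i⟩) < 0}.Nontrivial
  · obtain ⟨j, hj⟩ := htwo
    obtain ⟨i, hi⟩ := (hsign j).2
    have hmove : ∀ v ∈ activeFace ℓ {p | lam (u p) < 0}, ∀ t : ℝ, 0 ≤ t →
        v + t • u ⟨j, i⟩ ∈ linLocus ℓ := fun v hv t ht =>
      hu.add_smul_mem_linLocus hv.1 (hj.mono fun k hk => by
        exact ⟨by rintro rfl; exact hi.not_gt hk, hv.2 ⟨j, k⟩ hk⟩) ht
    obtain ⟨δ, hδ, h⟩ := exists_sphereExtends_of_direction (zero_mem_activeFace _)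
      (starConvex_activeFace _) hmove hi hε
    exact ⟨δ, hδ, fun k _ => h k⟩
  · push Not at htwo
    choose σ hσ using fun j => (hsign j).1
    have huniq (j i) (hi : lam (u ⟨j, i⟩) < 0) : i = σ j :=
      htwo j hi (hσ j)
    have hrange : {p | lam (u p) < 0} = range fun j => (⟨j, σ j⟩ : Σ j, I j) := by
      ext ⟨j, i⟩
      refine ⟨fun h => ⟨j, by rw [huniq j i h]⟩, ?_⟩
      rintro ⟨j', h⟩
      exact h ▸ hσ j'
    rw [hrange]
    exact hu.exists_sphereExtends_of_section hlam
      (fun j i hi => not_lt.1 fun h => hi (huniq j i h)) hε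

end FaceOutside

section LinearLocus

variable {V : Type*} [NormedAddCommGroup V] [InnerProductSpace ℝ V]
  {J : Type*} {I : J → Type*} [∀ j, Nontrivial (I j)]
  {ℓ : ∀ j, I j → V →L[ℝ] ℝ} {lam : V →L[ℝ] ℝ}

theorem exists_sphereExtends_of_lineality {w : V} (hw : ∀ j i i', ℓ j i w = ℓ j i' w)
    (hlam : lam w ≠ 0) {ε : ℝ} (hε : 0 < ε) :
    ∃ δ > 0, ∀ k, SphereExtends k (ball 0 δ ∩ linLocus ℓ ∩ outside lam)
      (ball 0 ε ∩ linLocus ℓ ∩ outside lam) := by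
  wlog hpos : 0 < lam w generalizing w
  · exact this (w := -w) (fun j i i' => by simp [hw j i i']) (by simpa using hlam)
      (by simpa using lt_of_le_of_ne (not_lt.1 hpos) hlam)
  exact exists_sphereExtends_of_direction (zero_mem_linLocus ℓ) starConvex_linLocus
    (fun v hv t _ => add_mem_linLocus_of_forall_eq hv fun j i i' => by
      rw [map_smul, map_smul, hw j i i']) hpos hε

variable [FiniteDimensional ℝ V] [Fintype J] [∀ j, Finite (I j)]

theorem exists_sphereExtends_linLocus_outside
    (hsurj : ∀ c : ∀ j, I j → ℝ, ∃ v, ∃ κ : J → ℝ, ∀ j i, ℓ j i v = c j i + κ j)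
    (hgen : ∀ j₀, ∃ v, (∀ j, j ≠ j₀ → ∀ i i', ℓ j i v = ℓ j i' v) ∧ lam v ≠ 0)
    {ε : ℝ} (hε : 0 < ε) :
    ∃ δ > 0, ∀ k, k + Fintype.card J < Module.finrank ℝ V →
      SphereExtends k (ball 0 δ ∩ linLocus ℓ ∩ outside lam)
        (ball 0 ε ∩ linLocus ℓ ∩ outside lam) := by
  classical
  have (j : J) : Fintype (I j) := Fintype.ofFinite _
  by_cases hlam : ∀ v, (∀ j i i', ℓ j i v = ℓ j i' v) → lam v = 0
  · obtain ⟨u, hu⟩ := exists_isDualSystem hsurj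
    obtain ⟨δ', hδ', hface⟩ := hu.exists_sphereExtends_activeFace hlam (fun j =>
      let ⟨_, hv, hv0⟩ := hgen j
      hu.exists_apply_neg_and_exists_apply_pos hlam hv hv0) hε
    obtain ⟨δ, hδ, h⟩ := hu.exists_sphereExtends_of_activeFace (lam := lam)
      (S := {p | lam (u p) < 0}) (by simp) hε hδ'
    exact ⟨δ, hδ, fun k hk => h k (by simpa using hface k hk)⟩
  · push Not at hlam
    obtain ⟨w, hw, hw0⟩ := hlam
    obtain ⟨δ, hδ, h⟩ := exists_sphereExtends_of_lineality hw hw0 hε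
    exact ⟨δ, hδ, fun k _ => h k⟩

end LinearLocus

/-! ### The affine locus -/

theorem maximizers_add {κ : Type*} {φ ψ : κ → ℝ} (hne : (maximizers φ).Nonempty)
    (h : ∀ i ∉ maximizers φ, ∀ k ∈ maximizers φ, φ i + ψ i < φ k + ψ k) :
    maximizers (fun i => φ i + ψ i) =
      Subtype.val '' maximizers fun i : maximizers φ => ψ i := by
  ext i
  rw [Subtype.coe_image, mem_ofPred_eq]
  have heq {i k} (hi : i ∈ maximizers φ) (hk : k ∈ maximizers φ) : φ i = φ k :=
    le_antisymm (hk i) (hi k)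
  constructor
  · intro hi
    have hiφ : i ∈ maximizers φ := by
      obtain ⟨k, hk⟩ := hne
      by_contra hiφ
      exact (h i hiφ k hk).not_ge (hi k)
    refine ⟨hiφ, fun k => ?_⟩
    have := hi k
    dsimp only at this ⊢
    linarith [heq hiφ k.2]
  · rintro ⟨hiφ, hi⟩ k
    by_cases hk : k ∈ maximizers φ
    · have := hi ⟨k, hk⟩
      dsimp only at this ⊢
      linarith [heq hk hiφ]
    · exact (h k hk i hiφ).le

section LocalModel

variable {V : Type*} [NormedAddCommGroup V]

theorem exists_sphereExtends_of_eventually_mem_iff {X T : Set V} {x : V}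
    (hXT : ∀ᶠ y in 𝓝 x, (y ∈ X ↔ y - x ∈ T)) {N : ℕ → Prop}
    (hT : ∀ ε > 0, ∃ δ > 0, ∀ k, N k → SphereExtends k (ball 0 δ ∩ T) (ball 0 ε ∩ T))
    {ε : ℝ} (hε : 0 < ε) :
    ∃ δ > 0, ∀ k, N k → SphereExtends k (ball x δ ∩ X) (ball x ε ∩ X) := by
  obtain ⟨ρ, hρ, hmem⟩ := Metric.eventually_nhds_iff.1 hXT
  obtain ⟨δ, hδ, h⟩ := hT (min ρ ε) (lt_min hρ hε)
  refine ⟨min ρ δ, lt_min hρ hδ, fun k hk => (h k hk).of_leftInvOn (i := (· - x)) (r := (x + ·))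
    (by fun_prop) ?_ (by fun_prop) ?_ fun y _ => add_sub_cancel x y⟩
  · rintro y ⟨hy, hyX⟩
    rw [mem_ball, lt_min_iff] at hy
    exact ⟨mem_ball_zero_iff.2 (dist_eq_norm y x ▸ hy.2), (hmem hy.1).1 hyX⟩
  · rintro v ⟨hv, hvT⟩
    rw [mem_ball_zero_iff, lt_min_iff] at hv
    have hdist : dist (x + v) x = ‖v‖ := by rw [dist_eq_norm, add_sub_cancel_left]
    refine ⟨mem_ball.2 (hdist.trans_lt hv.2), (hmem (hdist.trans_lt hv.1)).2 ?_⟩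
    rwa [add_sub_cancel_left]

end LocalModel

section AffineLocus

variable {V : Type*} [NormedAddCommGroup V] [InnerProductSpace ℝ V]
  {J : Type*} {K : J → Type*}

/-- The affine functions of colour `j` which attain the maximum at `x`. -/
def activeSet (b : ∀ j, K j → V) (a : ∀ j, K j → ℝ) (x : V) (j : J) : Set (K j) :=
  maximizers fun i => ⟪b j i, x⟫ + a j i

/-- The linear parts of the affine functions which attain the maximum at `x`. -/
noncomputable def activeForms (b : ∀ j, K j → V) (a : ∀ j, K j → ℝ) (x : V) (j : J)
    (i : activeSet b a x j) : V →L[ℝ] ℝ :=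
  innerSL ℝ (b j i)

/-- The points at which, for every colour, at least two affine functions attain the maximum. -/
def affLocus (b : ∀ j, K j → V) (a : ∀ j, K j → ℝ) : Set V :=
  {x | ∀ j, (activeSet b a x j).Nontrivial}

variable {b : ∀ j, K j → V} {a : ∀ j, K j → ℝ}

theorem zero_mem_linLocus_activeForms {x : V} (hx : x ∈ affLocus b a) :
    0 ∈ linLocus (activeForms b a x) :=
  have (j : J) : Nontrivial (activeSet b a x j) := (hx j).coe_sort
  zero_mem_linLocus _

theorem eq_of_mem_activeSet {x : V} {j : J} {i i' : K j} (hi : i ∈ activeSet b a x j)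
    (hi' : i' ∈ activeSet b a x j) : ⟪b j i, x⟫ + a j i = ⟪b j i', x⟫ + a j i' :=
  le_antisymm (hi' i) (hi i')

section LocalModel

variable [Finite J] [∀ j, Finite (K j)]

theorem eventually_activeSet_eq (x : V) :
    ∀ᶠ y in 𝓝 x, ∀ j, activeSet b a y j = Subtype.val '' maximizers fun i =>
      activeForms b a x j i (y - x) := by
  have hlt : ∀ᶠ y in 𝓝 x, ∀ j, ∀ i ∉ activeSet b a x j, ∀ k ∈ activeSet b a x j,
      ⟪b j i, y⟫ + a j i < ⟪b j k, y⟫ + a j k := by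
    simp only [Filter.eventually_all]
    intro j i hi k hk
    obtain ⟨l, hl⟩ : ∃ l, ⟪b j i, x⟫ + a j i < ⟪b j l, x⟫ + a j l := by
      by_contra! h
      exact hi h
    exact ContinuousAt.eventually_lt (by fun_prop) (by fun_prop) (hl.trans_le (hk l))
  filter_upwards [hlt] with y hy j
  have hsplit (i : K j) :
      ⟪b j i, y⟫ + a j i = ⟪b j i, x⟫ + a j i + ⟪b j i, y - x⟫ := by
    rw [inner_sub_right]
    ring
  cases isEmpty_or_nonempty (K j)
  · exact Subsingleton.elim _ _
  · simp only [activeSet, hsplit]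
    exact maximizers_add (Finite.exists_max _) fun i hi k hk => by
      simpa only [← hsplit] using hy j i hi k hk

theorem eventually_mem_affLocus_iff (x : V) :
    ∀ᶠ y in 𝓝 x, (y ∈ affLocus b a ↔ y - x ∈ linLocus (activeForms b a x)) := by
  filter_upwards [eventually_activeSet_eq (b := b) (a := a) x] with y hy
  refine forall_congr' fun j => ?_
  rw [hy j, image_nontrivial Subtype.val_injective]

theorem isClosed_affLocus : IsClosed (affLocus b a) := by
  refine isOpen_compl_iff.1 (isOpen_iff_mem_nhds.2 fun x hx => ?_)
  filter_upwards [eventually_activeSet_eq (b := b) (a := a) x] with y hy hmem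
  refine hx fun j => (hmem j).mono ?_
  rw [hy j]
  exact Subtype.coe_image_subset _ _

end LocalModel

theorem sub_mem_outside_iff {x y p : V} :
    y - x ∈ outside (innerSL ℝ (x - p)) ↔ dist x p < dist y p := by
  have hexpand : ‖y - p‖ ^ 2 = ‖x - p‖ ^ 2 + (2 * ⟪x - p, y - x⟫ + ‖y - x‖ ^ 2) := by
    rw [← sub_add_sub_cancel' x p y, norm_add_sq_real]
    ring
  rw [mem_outside_iff, dist_eq_norm, dist_eq_norm,
    ← pow_lt_pow_iff_left₀ (norm_nonneg _) (norm_nonneg _) two_ne_zero, hexpand,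
    innerSL_apply_apply, lt_add_iff_pos_right]

/-- At every point of the locus, the values of the active linear forms can be prescribed up to an
additive constant for each colour; equivalently, the differences of active gradients are linearly
independent. -/
def IsTransverse (b : ∀ j, K j → V) (a : ∀ j, K j → ℝ) : Prop :=
  ∀ x ∈ affLocus b a, ∀ c : ∀ j, K j → ℝ, ∃ v, ∃ κ : J → ℝ, ∀ j, ∀ i ∈ activeSet b a x j,
    ⟪b j i, v⟫ = c j i + κ j

/-- The directions along which the affine functions indexed by `A j` keep their differences, for
every colour `j`. -/
def tieSubspace (b : ∀ j, K j → V) (A : ∀ j, Set (K j)) : Submodule ℝ V where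
  carrier := {v | ∀ j, ∀ i ∈ A j, ∀ i' ∈ A j, ⟪b j i, v⟫ = ⟪b j i', v⟫}
  zero_mem' j i _ i' _ := by simp only [inner_zero_right]
  add_mem' hv hw j i hi i' hi' := by
    simp only [inner_add_right, hv j i hi i' hi', hw j i hi i' hi']
  smul_mem' t v hv j i hi i' hi' := by
    simp only [inner_smul_right, hv j i hi i' hi']

theorem tieSubspace_anti {A A' : ∀ j, Set (K j)} (h : ∀ j, A' j ⊆ A j) :
    tieSubspace b A ≤ tieSubspace b A' :=
  fun _ hv j i hi i' hi' => hv j i (h j hi) i' (h j hi')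

theorem sub_mem_tieSubspace {x y : V} (h : activeSet b a x = activeSet b a y) :
    x - y ∈ tieSubspace b (activeSet b a y) := by
  intro j i hi i' hi'
  have hy := eq_of_mem_activeSet hi hi'
  rw [← h] at hi hi'
  have hx := eq_of_mem_activeSet hi hi'
  simp only [inner_sub_right]
  linarith

section Center

variable [FiniteDimensional ℝ V]

theorem exists_forall_inner_ne {ι : Type*} [Finite ι] {w : ι → V} (hw : ∀ i, w i ≠ 0)
    (c : ι → ℝ) : ∃ p, ∀ i, ⟪w i, p⟫ ≠ c i := by
  have hopen (i) : IsOpen {p | ⟪w i, p⟫ ≠ c i} := isOpen_ne_fun (by fun_prop) (by fun_prop)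
  have hdense (i) : Dense {p | ⟪w i, p⟫ ≠ c i} := by
    have hne : innerSL ℝ (w i) ≠ 0 := fun h => hw i (by
      rw [← inner_self_eq_zero (𝕜 := ℝ), ← innerSL_apply_apply, h, zero_apply])
    exact (dense_compl_singleton (c i)).preimage
      (ContinuousLinearMap.isOpenMap_of_ne_zero _ hne)
  obtain ⟨p, hp⟩ := (dense_iInter_of_isOpen hopen hdense).nonempty
  exact ⟨p, mem_iInter.1 hp⟩

open Classical in
theorem IsTransverse.exists_mem_orthogonal_inf (hba : IsTransverse b a) {x : V}
    (hx : x ∈ affLocus b a) (j₀ : J) :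
    ∃ w ∈ (tieSubspace b (activeSet b a x))ᗮ ⊓
      tieSubspace b (Function.update (activeSet b a x) j₀ ∅), w ≠ 0 := by
  have hle : tieSubspace b (activeSet b a x) ≤
      tieSubspace b (Function.update (activeSet b a x) j₀ ∅) :=
    tieSubspace_anti (update_le_self_iff.2 (empty_subset _))
  refine Submodule.exists_mem_ne_zero_of_ne_bot fun hbot => ?_
  have heq := Submodule.sup_orthogonal_inf_of_hasOrthogonalProjection hle
  rw [hbot, sup_bot_eq] at heq
  obtain ⟨i, hi, i', hi', hne⟩ := hx j₀
  obtain ⟨v, κ, hv⟩ := hba x hx fun j k => if (⟨j, k⟩ : Σ j, K j) = ⟨j₀, i⟩ then 1 else 0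
  have hmem : v ∈ tieSubspace b (Function.update (activeSet b a x) j₀ ∅) := by
    intro j k hk k' hk'
    obtain rfl | hj := eq_or_ne j j₀
    · simp at hk
    · rw [Function.update_of_ne hj] at hk hk'
      rw [hv j k hk, hv j k' hk']
      simp [hj]
  rw [← heq] at hmem
  have htie := hmem j₀ i hi i' hi'
  rw [hv j₀ i hi, hv j₀ i' hi'] at htie
  simp [hne.symm] at htie

variable [Finite J] [∀ j, Finite (K j)]

open Classical in
theorem IsTransverse.exists_center (hba : IsTransverse b a) :
    ∃ p : V, ∀ x ∈ affLocus b a, ∀ j₀,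
      ∃ w ∈ tieSubspace b (Function.update (activeSet b a x) j₀ ∅), ⟪x - p, w⟫ ≠ 0 := by
  choose x₀ hx₀ heq using fun A : activeSet b a '' affLocus b a => A.2
  choose w hw hw0 using fun q : (activeSet b a '' affLocus b a) × J =>
    hba.exists_mem_orthogonal_inf (hx₀ q.1) q.2
  obtain ⟨p, hp⟩ := exists_forall_inner_ne hw0 fun q => ⟪w q, x₀ q.1⟫
  refine ⟨p, fun x hx j₀ => ?_⟩
  set q : (activeSet b a '' affLocus b a) × J := (⟨_, mem_image_of_mem _ hx⟩, j₀)
  have hq : activeSet b a x = activeSet b a (x₀ q.1) := (heq q.1).symm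
  refine ⟨w q, by rw [hq]; exact (hw q).2, fun hzero => hp q ?_⟩
  have horth : ⟪x - x₀ q.1, w q⟫ = 0 := (hw q).1 _ (sub_mem_tieSubspace hq)
  rw [inner_sub_left] at hzero horth
  rw [real_inner_comm, real_inner_comm (x₀ q.1)]
  linarith

end Center

open Classical in
theorem IsTransverse.exists_sphereExtends_outside [FiniteDimensional ℝ V] [Fintype J]
    [∀ j, Finite (K j)] (hba : IsTransverse b a) {x p : V} (hx : x ∈ affLocus b a)
    (hp : ∀ j₀, ∃ w ∈ tieSubspace b (Function.update (activeSet b a x) j₀ ∅), ⟪x - p, w⟫ ≠ 0)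
    {m : ℕ} (hm : m + Fintype.card J < Module.finrank ℝ V) {ε : ℝ} (hε : 0 < ε) :
    ∃ δ > 0, ∀ k ≤ m, SphereExtends k
      (ball 0 δ ∩ (linLocus (activeForms b a x) ∩ outside (innerSL ℝ (x - p))))
      (ball 0 ε ∩ (linLocus (activeForms b a x) ∩ outside (innerSL ℝ (x - p)))) := by
  have (j : J) : Nontrivial (activeSet b a x j) := (hx j).coe_sort
  have hsurj (c : ∀ j, activeSet b a x j → ℝ) :
      ∃ v, ∃ κ : J → ℝ, ∀ j i, activeForms b a x j i v = c j i + κ j := by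
    obtain ⟨v, κ, hv⟩ := hba x hx fun j => Function.extend Subtype.val (c j) 0
    refine ⟨v, κ, fun j i => (hv j i i.2).trans ?_⟩
    rw [Subtype.val_injective.extend_apply]
  have hgen (j₀ : J) : ∃ w, (∀ j, j ≠ j₀ → ∀ i i', activeForms b a x j i w =
      activeForms b a x j i' w) ∧ innerSL ℝ (x - p) w ≠ 0 := by
    obtain ⟨w, hw, hw0⟩ := hp j₀
    refine ⟨w, fun j hj i i' => hw j i ?_ i' ?_, hw0⟩ <;> simp [Function.update_of_ne hj]
  obtain ⟨δ, hδ, h⟩ := exists_sphereExtends_linLocus_outside hsurj hgen hε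
  exact ⟨δ, hδ, fun k hk => by simpa only [inter_assoc] using h k (by omega)⟩

theorem IsTransverse.spaceMConnected [FiniteDimensional ℝ V] [Fintype J] [∀ j, Finite (K j)]
    (hba : IsTransverse b a) {m : ℕ} (hm : m + Fintype.card J < Module.finrank ℝ V) :
    SpaceMConnected m (OnePoint (affLocus b a)) := by
  classical
  obtain ⟨p, hp⟩ := hba.exists_center
  refine onePoint_spaceMConnected isClosed_affLocus p (fun x hx ε hε => ?_) fun x hx ε hε => ?_
  · have hfill (ε : ℝ) (hε : 0 < ε) (k : ℕ) (_ : True) : SphereExtends k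
        (ball 0 ε ∩ linLocus (activeForms b a x)) (ball 0 ε ∩ linLocus (activeForms b a x)) :=
      sphereExtends_of_starConvex
        (((convex_ball 0 ε).starConvex (mem_ball_self hε)).inter starConvex_linLocus)
        ⟨mem_ball_self hε, zero_mem_linLocus_activeForms hx⟩ k
    simpa using exists_sphereExtends_of_eventually_mem_iff (eventually_mem_affLocus_iff x)
      (fun ε hε => ⟨ε, hε, hfill ε hε⟩) hε
  · have hlocal : ∀ᶠ y in 𝓝 x, (y ∈ {w | dist x p < dist w p} ∩ affLocus b a ↔
        y - x ∈ linLocus (activeForms b a x) ∩ outside (innerSL ℝ (x - p))) := by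
      filter_upwards [eventually_mem_affLocus_iff (b := b) (a := a) x] with y hy
      rw [mem_inter_iff, hy, and_comm, mem_inter_iff, sub_mem_outside_iff]
      rfl
    simpa only [inter_assoc] using exists_sphereExtends_of_eventually_mem_iff hlocal
      (fun ε hε => hba.exists_sphereExtends_outside hx (hp x hx) hm hε) hε

end AffineLocus

section BendLocus

variable {d r : ℕ} {b : Fin r → EuclideanSpace ℝ (Fin d)} {a : Fin r → ℝ}
  {x : EuclideanSpace ℝ (Fin d)}

theorem le_plMax (i : Fin r) (x : EuclideanSpace ℝ (Fin d)) : ⟪b i, x⟫ + a i ≤ plMax b a x := by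
  rw [real_inner_comm]
  exact le_ciSup (f := fun i => ⟪x, b i⟫ + a i) (finite_range _).bddAbove i

theorem plMax_eq_of_mem_maximizers {i : Fin r} (h : i ∈ maximizers fun i => ⟪b i, x⟫ + a i) :
    plMax b a x = ⟪b i, x⟫ + a i := by
  have : Nonempty (Fin r) := ⟨i⟩
  refine le_antisymm (ciSup_le fun k => ?_) (le_plMax i x)
  rw [real_inner_comm]
  exact h k

theorem hasFDerivAt_inner_add_const {V : Type*} [NormedAddCommGroup V] [InnerProductSpace ℝ V]
    (b : V) (a : ℝ) (x : V) : HasFDerivAt (fun x => ⟪b, x⟫ + a) (innerSL ℝ b) x :=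
  (innerSL ℝ b).hasFDerivAt.add_const a

theorem differentiableAt_plMax [Nonempty (Fin r)]
    (h : (maximizers fun i => ⟪b i, x⟫ + a i).Subsingleton) :
    DifferentiableAt ℝ (plMax b a) x := by
  obtain ⟨i₀, hi₀⟩ := Finite.exists_max fun i => ⟪b i, x⟫ + a i
  refine ((hasFDerivAt_inner_add_const (b i₀) (a i₀) x).congr_of_eventuallyEq ?_).differentiableAt
  filter_upwards [eventually_activeSet_eq (b := fun _ : Unit => b) (a := fun _ => a) x] with y hy
  obtain ⟨i, hi⟩ := Finite.exists_max fun i => ⟪b i, y⟫ + a i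
  have hix : i ∈ maximizers fun i => ⟪b i, x⟫ + a i :=
    Subtype.coe_image_subset _ _ ((hy ()).subset hi)
  rw [← h hix hi₀]
  exact plMax_eq_of_mem_maximizers hi

theorem fderiv_plMax_eq_of_mem_maximizers (hdiff : DifferentiableAt ℝ (plMax b a) x) {i : Fin r}
    (hi : i ∈ maximizers fun i => ⟪b i, x⟫ + a i) :
    fderiv ℝ (plMax b a) x = innerSL ℝ (b i) := by
  have hmin : IsLocalMin (fun y => plMax b a y - (⟪b i, y⟫ + a i)) x :=
    Filter.Eventually.of_forall fun y => by
      dsimp only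
      rw [plMax_eq_of_mem_maximizers hi, sub_self]
      exact sub_nonneg.2 (le_plMax i y)
  exact sub_eq_zero.1 (hmin.hasFDerivAt_eq_zero
    (hdiff.hasFDerivAt.sub (hasFDerivAt_inner_add_const (b i) (a i) x)))

theorem mem_bendLocus_iff [Nonempty (Fin r)] (hb : Function.Injective b) :
    x ∈ bendLocus b a ↔ (maximizers fun i => ⟪b i, x⟫ + a i).Nontrivial := by
  constructor
  · intro hx
    by_contra hsub
    exact hx (differentiableAt_plMax (not_nontrivial_iff.1 hsub))
  · rintro ⟨i, hi, i', hi', hne⟩ hdiff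
    have heq : innerSL ℝ (b i) = innerSL ℝ (b i') :=
      (fderiv_plMax_eq_of_mem_maximizers hdiff hi).symm.trans
        (fderiv_plMax_eq_of_mem_maximizers hdiff hi')
    exact hne (hb (ext_inner_right ℝ fun v => congrArg (· v) heq))

theorem iInter_bendLocus {n : ℕ} {r : Fin n → ℕ} [∀ j, Nonempty (Fin (r j))]
    {b : ∀ j, Fin (r j) → EuclideanSpace ℝ (Fin d)} {a : ∀ j, Fin (r j) → ℝ}
    (hb : ∀ j, Function.Injective (b j)) :
    ⋂ j, bendLocus (b j) (a j) = affLocus b a := by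
  ext x
  rw [mem_iInter]
  exact forall_congr' fun j => mem_bendLocus_iff (hb j)

end BendLocus

/-! ### Genericity -/

section LinearIndependence

variable {ι 𝕜 W : Type*} [Field 𝕜] [AddCommGroup W] [Module 𝕜 W]

theorem exists_linearMap_apply_eq {M : Type*} [AddCommGroup M] [Module 𝕜 M] {w : ι → W}
    (hw : LinearIndependent 𝕜 w) (c : ι → M) : ∃ A : W →ₗ[𝕜] M, ∀ e, A (w e) = c e := by
  obtain ⟨A, hA⟩ := ((Module.Basis.span hw).constr 𝕜 c).exists_extend
  refine ⟨A, fun e => ?_⟩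
  rw [← (Module.Basis.span hw).constr_basis 𝕜 c e, ← hA, LinearMap.comp_apply,
    Submodule.subtype_apply, Module.Basis.span_apply]

theorem finite_setOf_not_linearIndependent_add_smul [Finite ι] (u : ι → W) {w : ι → W}
    (hw : LinearIndependent 𝕜 w) :
    {t : 𝕜 | ¬ LinearIndependent 𝕜 fun e => u e + t • w e}.Finite := by
  classical
  have := Fintype.ofFinite ι
  obtain ⟨A, hA⟩ := exists_linearMap_apply_eq hw fun e => (Pi.single e 1 : ι → 𝕜)
  let B : Matrix ι ι 𝕜 := Matrix.of fun e => A (u e)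
  refine ((-B).charpoly.rootSet_finite 𝕜).subset fun t ht => ?_
  rw [Polynomial.mem_rootSet_of_ne (Matrix.charpoly_monic _).ne_zero, Polynomial.coe_aeval_eq_eval,
    Matrix.eval_charpoly]
  by_contra hdet
  have hrow : (A ∘ fun e => u e + t • w e) = (Matrix.scalar ι t - -B).row := by
    ext e e'
    simp [hA, B, Matrix.diagonal_apply, Pi.single_apply, eq_comm (a := e), add_comm]
  refine ht (LinearIndependent.of_comp A ?_)
  rw [hrow]
  exact Matrix.linearIndependent_rows_of_isUnit
    ((Matrix.isUnit_iff_isUnit_det _).2 (isUnit_iff_ne_zero.2 hdet))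

end LinearIndependence

theorem ae_linearIndependent {F W ι : Type*} [NormedAddCommGroup F] [NormedSpace ℝ F]
    [FiniteDimensional ℝ F] [MeasurableSpace F] [BorelSpace F] (μ : Measure F)
    [μ.IsAddHaarMeasure] [NormedAddCommGroup W] [NormedSpace ℝ W] [Finite ι]
    (φ : ι → F →ₗ[ℝ] W) {q : F} (hq : LinearIndependent ℝ fun e => φ e q) :
    ∀ᵐ p ∂μ, LinearIndependent ℝ fun e => φ e p := by
  have hcont : Continuous fun p e => φ e p :=
    continuous_pi fun e => (φ e).continuous_of_finiteDimensional
  have hopen : IsOpen {p | LinearIndependent ℝ fun e => φ e p} :=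
    isOpen_setOfPred_linearIndependent.preimage hcont
  refine ae_mem_of_ae_add_linearMap_mem (s := {p | LinearIndependent ℝ fun e => φ e p})
    (LinearMap.toSpanSingleton ℝ F q) volume μ hopen.measurableSet fun p => ?_
  filter_upwards [(finite_setOf_not_linearIndependent_add_smul
    (fun e => φ e p) hq).countable.ae_notMem volume] with t ht
  simpa using ht

section IndependentDifferences

variable {J : Type*} {K : J → Type*}

/-- General position of a family of vectors, coloured by `J`: after choosing a base vector of each
colour, any at most `dim W` differences of the other vectors with the base vector of their colour
are linearly independent. -/
def HasIndependentDifferences {W : Type*} [AddCommGroup W] [Module ℝ W] (w : ∀ j, K j → W) :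
    Prop :=
  ∀ (base : ∀ j, K j) (S : Finset (Σ j, K j)), (∀ e ∈ S, e.2 ≠ base e.1) →
    S.card ≤ Module.finrank ℝ W →
    LinearIndependent ℝ fun e : S => w e.1.1 e.1.2 - w e.1.1 (base e.1.1)

section Almost

variable {E W : Type*}

theorem exists_linearIndependent_sub [AddCommGroup W] [Module ℝ W] [FiniteDimensional ℝ W]
    (base : ∀ j, K j) {S : Finset (Σ j, K j)} (hS : ∀ e ∈ S, e.2 ≠ base e.1)
    (hcard : S.card ≤ Module.finrank ℝ W) :
    ∃ w : ∀ j, K j → W,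
      LinearIndependent ℝ fun e : S => w e.1.1 e.1.2 - w e.1.1 (base e.1.1) := by
  classical
  obtain ⟨emb⟩ : Nonempty (S ↪ Fin (Module.finrank ℝ W)) :=
    Function.Embedding.nonempty_of_card_le (by simpa using hcard)
  let w (j : J) (i : K j) : W :=
    if h : ⟨j, i⟩ ∈ S then Module.finBasis ℝ W (emb ⟨⟨j, i⟩, h⟩) else 0
  have hw (e : S) : w e.1.1 e.1.2 - w e.1.1 (base e.1.1) = Module.finBasis ℝ W (emb e) := by
    have hbase : w e.1.1 (base e.1.1) = 0 := dif_neg fun h => hS _ h rfl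
    rw [hbase, sub_zero]
    exact dif_pos e.2
  refine ⟨w, ?_⟩
  simp only [hw]
  exact (Module.finBasis ℝ W).linearIndependent.comp _ emb.injective

theorem ae_hasIndependentDifferences [Fintype J] [∀ j, Fintype (K j)] [NormedAddCommGroup E]
    [NormedSpace ℝ E] [FiniteDimensional ℝ E] [MeasureSpace E] [BorelSpace E]
    [(volume : Measure E).IsAddHaarMeasure] [NormedAddCommGroup W] [NormedSpace ℝ W]
    (π : E →ₗ[ℝ] W) (hπ : Function.Surjective π) :
    ∀ᵐ p ∂(volume : Measure (∀ j, K j → E)), HasIndependentDifferences fun j i => π (p j i) := by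
  have := FiniteDimensional.proper ℝ E
  have := secondCountable_of_proper (α := E)
  have : FiniteDimensional ℝ W := Module.Finite.of_surjective π hπ
  have (j : J) : (volume : Measure (K j → E)).IsAddHaarMeasure :=
    Measure.pi.isAddHaarMeasure fun _ => volume
  have : (volume : Measure (∀ j, K j → E)).IsAddHaarMeasure :=
    Measure.pi.isAddHaarMeasure fun _ => volume
  simp only [HasIndependentDifferences, ae_all_iff]
  intro base S hS hcard
  let φ (e : S) : (∀ j, K j → E) →ₗ[ℝ] W :=
    π ∘ₗ ((LinearMap.proj e.1.2 : (K e.1.1 → E) →ₗ[ℝ] E) - LinearMap.proj (base e.1.1)) ∘ₗ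
      LinearMap.proj e.1.1
  have hφ (p : ∀ j, K j → E) (e : S) :
      φ e p = π (p e.1.1 e.1.2) - π (p e.1.1 (base e.1.1)) := by
    simp [φ]
  obtain ⟨w, hw⟩ := exists_linearIndependent_sub (W := W) base hS hcard
  choose q hq using fun j i => hπ (w j i)
  simp only [← hφ]
  exact ae_linearIndependent volume φ (q := q) (by simpa only [hφ, hq] using hw)

end Almost

theorem HasIndependentDifferences.injective {W : Type*} [AddCommGroup W] [Module ℝ W]
    [∀ j, Nonempty (K j)] {w : ∀ j, K j → W} (hw : HasIndependentDifferences w)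
    (hW : 1 ≤ Module.finrank ℝ W) (j : J) : Function.Injective (w j) := by
  classical
  intro i i' h
  by_contra hne
  let base : ∀ j, K j := Function.update (fun _ => Classical.arbitrary _) j i'
  have hli := hw base {⟨j, i⟩} (by simpa [base] using hne) (by simpa using hW)
  exact hli.ne_zero ⟨⟨j, i⟩, by simp⟩ (by simpa [base, sub_eq_zero] using h)

variable {V : Type*} [NormedAddCommGroup V] [InnerProductSpace ℝ V] [FiniteDimensional ℝ V]
  {p : ∀ j, K j → V × ℝ}

-- Evaluation at `x` is a nonzero linear form on `V × ℝ` which vanishes on the differences of active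
-- affine functions, so these differences cannot span.
theorem HasIndependentDifferences.card_le_finrank (hp : HasIndependentDifferences p) {x : V}
    {base : ∀ j, K j}
    (hbase : ∀ j, base j ∈ activeSet (fun j i => (p j i).1) (fun j i => (p j i).2) x j)
    {S : Finset (Σ j, K j)} (hS : ∀ e ∈ S, e.2 ≠ base e.1)
    (hactive : ∀ e ∈ S,
      e.2 ∈ activeSet (fun j i => (p j i).1) (fun j i => (p j i).2) x e.1) :
    S.card ≤ Module.finrank ℝ V := by
  by_contra! hlt
  obtain ⟨T, hTS, hcard⟩ := Finset.exists_subset_card_eq (Nat.succ_le_of_lt hlt)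
  have hfinrank : Module.finrank ℝ (V × ℝ) = Module.finrank ℝ V + 1 := by simp
  have hli := hp base T (fun e he => hS e (hTS he)) (by rw [hfinrank, hcard])
  have hspan := hli.span_eq_top_of_card_eq_finrank' (by simp [hcard])
  let eval : V × ℝ →ₗ[ℝ] ℝ := (innerSL ℝ x).toLinearMap.coprod LinearMap.id
  have heval (y : V) (t : ℝ) : eval (y, t) = ⟪y, x⟫ + t := by simp [eval, real_inner_comm]
  have hzero : eval = 0 := LinearMap.ext_on_range hspan fun e => by
    rw [map_sub, LinearMap.zero_apply, sub_eq_zero, heval, heval]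
    exact eq_of_mem_activeSet (hactive e.1 (hTS e.2)) (hbase e.1.1)
  have hone := heval 0 1
  simp [hzero] at hone

theorem HasIndependentDifferences.isTransverse [Finite J] [∀ j, Finite (K j)]
    (hp : HasIndependentDifferences p)
    (hgrad : HasIndependentDifferences fun j i => (p j i).1) :
    IsTransverse (fun j i => (p j i).1) fun j i => (p j i).2 := by
  intro x hx c
  choose base hbase using fun j => (hx j).nonempty
  let S : Finset (Σ j, K j) := (toFinite {e | e.2 ∈ activeSet (fun j i => (p j i).1)
    (fun j i => (p j i).2) x e.1 ∧ e.2 ≠ base e.1}).toFinset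
  have hS (e) (he : e ∈ S) := (Finite.mem_toFinset _).1 he
  have hcard := hp.card_le_finrank hbase (fun e he => (hS e he).2) fun e he => (hS e he).1
  obtain ⟨θ, hθ⟩ := exists_linearMap_apply_eq (hgrad base S (fun e he => (hS e he).2) hcard)
    fun e => c e.1.1 e.1.2 - c e.1.1 (base e.1.1)
  obtain ⟨v, hv⟩ : ∃ v, ∀ y, ⟪y, v⟫ = θ y :=
    ⟨(InnerProductSpace.toDual ℝ V).symm θ.toContinuousLinearMap, fun y => by
      rw [real_inner_comm]
      exact InnerProductSpace.toDual_symm_apply⟩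
  refine ⟨v, fun j => ⟪(p j (base j)).1, v⟫ - c j (base j), fun j i hi => ?_⟩
  obtain rfl | hib := eq_or_ne i (base j)
  · rw [add_sub_cancel]
  · have hsub := hθ ⟨⟨j, i⟩, (Finite.mem_toFinset _).2 ⟨hi, hib⟩⟩
    rw [← hv, inner_sub_left] at hsub
    linarith

end IndependentDifferences

/-- For Lebesgue-almost-every choice of the coefficient tuples of `n` convex PL functions on
`ℝ^d` (`2 ≤ d`, `1 ≤ n < d`, each a maximum of `r j ≥ 2` affine functions), the one-point
compactification of the complete intersection of the corresponding bend loci is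
`(d - n - 1)`-connected. -/
theorem complete_intersection_onePoint_connected (d n : ℕ) (hd : 2 ≤ d) (hn : 1 ≤ n)
    (hnd : n < d) (r : Fin n → ℕ) (hr : ∀ j, 2 ≤ r j) :
    ∀ᵐ p ∂(volume : Measure (Π j : Fin n, Fin (r j) → EuclideanSpace ℝ (Fin d) × ℝ)),
      SpaceMConnected (d - n - 1)
        (OnePoint ↥(⋂ j : Fin n, bendLocus (fun i => (p j i).1) (fun i => (p j i).2))) := by
  have : (volume : Measure (EuclideanSpace ℝ (Fin d) × ℝ)).IsAddHaarMeasure :=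
    Measure.prod.instIsAddHaarMeasure volume volume
  have (j : Fin n) : Nonempty (Fin (r j)) := Fin.pos_iff_nonempty.1 (two_pos.trans_le (hr j))
  filter_upwards [ae_hasIndependentDifferences LinearMap.id Function.surjective_id,
    ae_hasIndependentDifferences (LinearMap.fst ℝ _ _) Prod.fst_surjective] with p hp hgrad
  have hd' : 1 ≤ Module.finrank ℝ (EuclideanSpace ℝ (Fin d)) := by simp; omega
  rw [iInter_bendLocus (b := fun j i => (p j i).1) (hgrad.injective hd')]
  exact (hp.isTransverse hgrad).spaceMConnected (by simp; omega)
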